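/- There is an absolute constant C > 0 such that for every even positive integer n that equals the least common multiple of all of its shifted-prime divisors (i.e., n = min⟨n⟩), the natural density δ(⟨n⟩) of the equivalence class ⟨n⟩ satisfies δ(⟨n⟩) ≥ 1 / n^{C·τ(n)}, where τ(n) is the number of divisors of n. -/

import Mathlib

open Filter Real

/-- The set of shifted-prime divisors of `n`: divisors `d` of `n` with `d + 1` prime. -/
def spd (n : ℕ) : Finset ℕ := n.divisors.filter (fun d => Nat.Prime (d + 1))

/-!
Let `L` be the least common multiple of the shifted-prime divisors of `n`. The class of `n` consists
of the products `L * q` with `q` divisible by none of the numbers `a = d / gcd d L`, where `d + 1`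
is prime and `d ∤ L`. For each such `a` there is `d' ≤ L` with `d' * a + 1` prime, and the point is
that few integers have a large divisor of this kind.

Fix a doubly exponential block of values of `a` and a set `P` of primes `p > L`, small compared to
the block, with reciprocal sum `S`. Almost every `x` has at most `4 / 3 * S` divisors in `P` and is
divisible by no `p ^ 2` with `p ∈ P`. If such an `x` factors as `a * b`, then
`(1 / 2) ^ ω(a) * (1 / 2) ^ ω(b) ≥ exp (-(4 / 3 * log 2 * S))`, where `ω` counts divisors in `P`.
Weighted in this way, the `b` up to a given bound have density `≪ exp (-(S / 2))`, and the `a` with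
`d' * a + 1` free of factors in `P` have density `≪ exp (-(3 / 2 * S))`, by Brun's pure sieve. Since
`2 - 4 / 3 * log 2 > 1`, the product wins over the sum of `1 / a` over the block, which is
`exp S` to a power close to `1`. The sieve needs `b` not to be too small; among the integers up to
`X`, those with `b ≤ X ^ (1 / Q)` are few by Chebyshev's bound for the primes `d' * a + 1`.

So the multiples of all large `a` have small upper density, whence the density of the class exists
and the large `a` remove at most half of the integers. For the small `a`, discarding all multiples
of the primes up to a cutoff `2 ^ 2 ^ O(log n)` costs only a Mertens product, which is at least a
fixed negative power of `n`.
-/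

open Finset Function
open scoped Topology

section Bonferroni

/-- The expansion of `∏ x ∈ s, (1 - x)` in elementary symmetric functions, truncated after
degree `k`. -/
def bonferroniSum {R : Type*} [CommRing R] (s : Multiset R) (k : ℕ) : R :=
  ∑ j ∈ range (k + 1), (-1) ^ j * s.esymm j

lemma esymm_cons_succ {R : Type*} [CommSemiring R] (a : R) (s : Multiset R) (k : ℕ) :
    (a ::ₘ s).esymm (k + 1) = s.esymm (k + 1) + a * s.esymm k := by
  simp [Multiset.esymm, Multiset.powersetCard_cons, Multiset.sum_map_mul_left]

variable {R : Type*} [CommRing R]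

lemma bonferroniSum_zero_right (s : Multiset R) : bonferroniSum s 0 = 1 := by
  simp [bonferroniSum, Multiset.esymm]

lemma bonferroniSum_succ (s : Multiset R) (k : ℕ) :
    bonferroniSum s (k + 1) = bonferroniSum s k + (-1) ^ (k + 1) * s.esymm (k + 1) :=
  sum_range_succ _ _

lemma bonferroniSum_cons_succ (a : R) (s : Multiset R) (k : ℕ) :
    bonferroniSum (a ::ₘ s) (k + 1) = bonferroniSum s (k + 1) - a * bonferroniSum s k := by
  induction k with
  | zero => simp [bonferroniSum_succ, bonferroniSum_zero_right, Multiset.esymm]; ring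
  | succ k ih =>
    rw [bonferroniSum_succ _ (k + 1), ih, esymm_cons_succ, bonferroniSum_succ s (k + 1),
      bonferroniSum_succ s k]
    ring

lemma bonferroniSum_zero_left (k : ℕ) : bonferroniSum (0 : Multiset R) k = 1 := by
  induction k with
  | zero => exact bonferroniSum_zero_right 0
  | succ k ih => simp [bonferroniSum_succ, ih, Multiset.esymm, Multiset.powersetCard_zero_right]

variable [PartialOrder R] [IsOrderedRing R]

theorem bonferroni_inequality {s : Multiset R} (h0 : ∀ x ∈ s, 0 ≤ x) (h1 : ∀ x ∈ s, x ≤ 1) (k : ℕ) :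
    0 ≤ (-1) ^ k * (bonferroniSum s k - (s.map (1 - ·)).prod) := by
  induction s using Multiset.induction_on generalizing k with
  | empty => simp [bonferroniSum_zero_left]
  | cons a s ih =>
    simp only [Multiset.forall_mem_cons] at h0 h1
    have ih := ih h0.2 h1.2
    cases k with
    | zero =>
      have hs := ih 0
      simp only [bonferroniSum_zero_right, Multiset.map_cons, Multiset.prod_cons, pow_zero, one_mul,
        sub_nonneg] at hs ⊢
      calc (1 - a) * (s.map (1 - ·)).prod ≤ (1 - a) * 1 :=
            mul_le_mul_of_nonneg_left hs (sub_nonneg.2 h1.1)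
        _ ≤ 1 := by simpa using h0.1
    | succ k =>
      rw [bonferroniSum_cons_succ, Multiset.map_cons, Multiset.prod_cons]
      convert add_nonneg (ih (k + 1)) (mul_nonneg h0.1 (ih k)) using 1
      ring

lemma prod_one_sub_le_bonferroniSum {s : Multiset R} (h0 : ∀ x ∈ s, 0 ≤ x) (h1 : ∀ x ∈ s, x ≤ 1)
    {k : ℕ} (hk : Even k) : (s.map (1 - ·)).prod ≤ bonferroniSum s k := by
  simpa [hk.neg_one_pow] using bonferroni_inequality h0 h1 k

lemma bonferroniSum_le_prod_one_sub_add_esymm {s : Multiset R} (h0 : ∀ x ∈ s, 0 ≤ x)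
    (h1 : ∀ x ∈ s, x ≤ 1) {k : ℕ} (hk : Even k) :
    bonferroniSum s k ≤ (s.map (1 - ·)).prod + s.esymm (k + 1) := by
  have h := bonferroni_inequality h0 h1 (k + 1)
  simpa [hk.add_one.neg_one_pow, bonferroniSum_succ, add_comm] using h

end Bonferroni

lemma esymm_le_exp_neg_sum {ι : Type*} {s : Finset ι} {w : ι → ℝ} (h0 : ∀ i ∈ s, 0 ≤ w i) {k : ℕ}
    (hk : 4 * ∑ i ∈ s, w i ≤ k) : (s.val.map w).esymm k ≤ exp (-∑ i ∈ s, w i) := by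
  have h_scaled : exp 1 ^ k * (s.val.map w).esymm k ≤ ∏ i ∈ s, (1 + exp 1 * w i) := by
    rw [prod_one_add, esymm_map_val, mul_sum]
    calc ∑ t ∈ s.powersetCard k, exp 1 ^ k * t.prod w
        = ∑ t ∈ s.powersetCard k, ∏ i ∈ t, exp 1 * w i := sum_congr rfl fun t ht ↦ by
          rw [prod_mul_distrib, prod_const, (mem_powersetCard.1 ht).2]
      _ ≤ ∑ t ∈ s.powerset, ∏ i ∈ t, exp 1 * w i :=
          sum_le_sum_of_subset_of_nonneg
            (fun t ht ↦ mem_powerset.2 (mem_powersetCard.1 ht).1)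
            fun t ht _ ↦ prod_nonneg fun i hi ↦
              mul_nonneg (exp_pos 1).le (h0 i (mem_powerset.1 ht hi))
  have h_exp : ∏ i ∈ s, (1 + exp 1 * w i) ≤ exp k * exp (-∑ i ∈ s, w i) := by
    calc ∏ i ∈ s, (1 + exp 1 * w i) ≤ exp (∑ i ∈ s, exp 1 * w i) := by
          rw [exp_sum]
          refine prod_le_prod (fun i hi ↦ ?_) fun i _ ↦ by linarith [add_one_le_exp (exp 1 * w i)]
          have := h0 i hi
          positivity
      _ ≤ exp k * exp (-∑ i ∈ s, w i) := by
          rw [← mul_sum, ← exp_add]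
          gcongr
          nlinarith [sum_nonneg h0, exp_one_lt_d9]
  rw [← exp_one_pow] at h_exp
  exact le_of_mul_le_mul_left (h_scaled.trans h_exp) (by positivity)

lemma prod_one_sub_le_exp_neg_sum {ι : Type*} {s : Finset ι} {w : ι → ℝ} (h1 : ∀ i ∈ s, w i ≤ 1) :
    ∏ i ∈ s, (1 - w i) ≤ exp (-∑ i ∈ s, w i) := by
  rw [← sum_neg_distrib, exp_sum]
  exact prod_le_prod (fun i hi ↦ sub_nonneg.2 (h1 i hi)) fun i _ ↦ one_sub_le_exp_neg (w i)

section Periodic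

/-- The average of `f` over one period `{0, …, m - 1}`. -/
noncomputable def residueMean (f : ℕ → ℝ) (m : ℕ) : ℝ :=
  (∑ a ∈ range m, f a) / m

lemma residueMean_nonneg {f : ℕ → ℝ} (h0 : ∀ a, 0 ≤ f a) (m : ℕ) : 0 ≤ residueMean f m :=
  div_nonneg (sum_nonneg fun a _ ↦ h0 a) m.cast_nonneg

lemma residueMean_le_one {f : ℕ → ℝ} (h1 : ∀ a, f a ≤ 1) (m : ℕ) : residueMean f m ≤ 1 := by
  refine div_le_one_of_le₀ ?_ m.cast_nonneg
  simpa using sum_le_sum fun a (_ : a ∈ range m) ↦ h1 a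

lemma sum_range_mul_add_of_periodic {f : ℕ → ℝ} {m : ℕ} (hf : Periodic f m) (q r : ℕ) :
    ∑ a ∈ range (m * q + r), f a = q * ∑ a ∈ range m, f a + ∑ a ∈ range r, f a := by
  induction q generalizing r with
  | zero => simp
  | succ q ih =>
    have h_shift (a : ℕ) : f (m + a) = f a := by rw [add_comm, hf]
    rw [mul_add_one, add_assoc, ih, sum_range_add]
    simp only [h_shift]
    push_cast
    ring

lemma abs_sum_range_sub_mul_residueMean_le {f : ℕ → ℝ} {m : ℕ} (hf : Periodic f m)
    (h0 : ∀ a, 0 ≤ f a) (h1 : ∀ a, f a ≤ 1) (hm : 0 < m) (N : ℕ) :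
    |∑ a ∈ range N, f a - N * residueMean f m| ≤ m := by
  have h_split : ∑ a ∈ range N, f a - N * residueMean f m
      = ∑ a ∈ range (N % m), f a - (N % m : ℕ) * residueMean f m := by
    have h_mean : m * residueMean f m = ∑ a ∈ range m, f a :=
      mul_div_cancel₀ _ (Nat.cast_ne_zero.2 hm.ne')
    have h_div : (N : ℝ) = m * (N / m : ℕ) + (N % m : ℕ) := mod_cast (Nat.div_add_mod N m).symm
    have h_periods := sum_range_mul_add_of_periodic hf (N / m) (N % m)
    rw [Nat.div_add_mod, ← h_mean] at h_periods
    linear_combination h_periods - residueMean f m * h_div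
  have h_rem : (N % m : ℕ) ≤ (m : ℝ) := mod_cast (Nat.mod_lt N hm).le
  have h_sum : ∑ a ∈ range (N % m), f a ≤ (N % m : ℕ) := by
    simpa using sum_le_sum fun a (_ : a ∈ range (N % m)) ↦ h1 a
  have h_mean : (N % m : ℕ) * residueMean f m ≤ (N % m : ℕ) :=
    mul_le_of_le_one_right (Nat.cast_nonneg _) (residueMean_le_one h1 m)
  rw [h_split, abs_le]
  constructor
  · linarith [sum_nonneg fun a (_ : a ∈ range (N % m)) ↦ h0 a]
  · linarith [mul_nonneg (Nat.cast_nonneg (α := ℝ) (N % m)) (residueMean_nonneg h0 m)]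

lemma sum_range_mul_of_coprime {R : Type*} [CommSemiring R] {f g : ℕ → R} {m n : ℕ}
    (hf : Periodic f m) (hg : Periodic g n) (hm : m ≠ 0) (hn : n ≠ 0) (hmn : m.Coprime n) :
    ∑ a ∈ range (m * n), f a * g a = (∑ a ∈ range m, f a) * ∑ a ∈ range n, g a := by
  rw [sum_mul_sum, ← sum_product']
  refine sum_bij' (fun a _ ↦ (a % m, a % n)) (fun x _ ↦ (Nat.chineseRemainder hmn x.1 x.2 : ℕ))
    (fun a _ ↦ ?_) (fun x _ ↦ ?_) (fun a ha ↦ ?_) (fun x hx ↦ ?_) (fun a _ ↦ ?_)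
  · simp [Nat.mod_lt, Nat.pos_of_ne_zero, hm, hn]
  · exact mem_range.2 (Nat.chineseRemainder_lt_mul hmn _ _ hm hn)
  · have h := (Nat.chineseRemainder hmn (a % m) (a % n)).2
    refine Nat.ModEq.eq_of_lt_of_lt ?_ (Nat.chineseRemainder_lt_mul hmn _ _ hm hn) (mem_range.1 ha)
    rw [← Nat.modEq_and_modEq_iff_modEq_mul hmn]
    exact ⟨h.1.trans (Nat.mod_modEq _ _), h.2.trans (Nat.mod_modEq _ _)⟩
  · have h := (Nat.chineseRemainder hmn x.1 x.2).2
    simp only [mem_product, mem_range] at hx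
    ext
    · exact Eq.trans h.1 (Nat.mod_eq_of_lt hx.1)
    · exact Eq.trans h.2 (Nat.mod_eq_of_lt hx.2)
  · rw [hf.map_mod_nat, hg.map_mod_nat]

lemma residueMean_mul_of_coprime {f g : ℕ → ℝ} {m n : ℕ} (hf : Periodic f m) (hg : Periodic g n)
    (hm : m ≠ 0) (hn : n ≠ 0) (hmn : m.Coprime n) :
    residueMean (fun a ↦ f a * g a) (m * n) = residueMean f m * residueMean g n := by
  rw [residueMean, sum_range_mul_of_coprime hf hg hm hn hmn, Nat.cast_mul, residueMean, residueMean,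
    div_mul_div_comm]

variable {ι : Type*} {s : Finset ι} {m : ι → ℕ} {f : ι → ℕ → ℝ}

lemma periodic_prod (hf : ∀ i ∈ s, Periodic (f i) (m i)) :
    Periodic (fun a ↦ ∏ i ∈ s, f i a) (∏ i ∈ s, m i) := fun a ↦
  prod_congr rfl fun i hi ↦ by
    obtain ⟨c, hc⟩ := dvd_prod_of_mem m hi
    rw [hc, mul_comm]
    exact (hf i hi).nat_mul c a

lemma residueMean_prod_of_pairwise_coprime (hf : ∀ i ∈ s, Periodic (f i) (m i))
    (hm : ∀ i ∈ s, m i ≠ 0) (hs : (s : Set ι).Pairwise (Nat.Coprime on m)) :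
    residueMean (fun a ↦ ∏ i ∈ s, f i a) (∏ i ∈ s, m i) = ∏ i ∈ s, residueMean (f i) (m i) := by
  classical
  induction s using Finset.induction_on with
  | empty => simp [residueMean]
  | insert i s hi ih =>
    simp only [mem_insert, forall_eq_or_imp] at hf hm
    rw [coe_insert, Set.pairwise_insert_of_symm_of_notMem (mod_cast hi)] at hs
    simp only [prod_insert hi]
    rw [residueMean_mul_of_coprime hf.1 (periodic_prod hf.2) hm.1 (prod_ne_zero_iff.2 hm.2)
      (Nat.Coprime.prod_right hs.2), ih hf.2 hm.2 hs.1]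

end Periodic

section BrunSieve

lemma sum_range_pow_le_add_one_pow {x : ℝ} (hx : 0 ≤ x) (k : ℕ) :
    ∑ j ∈ range (k + 1), x ^ j ≤ (x + 1) ^ k := by
  rw [add_pow]
  refine sum_le_sum fun j hj ↦ ?_
  have h_choose : (1 : ℝ) ≤ k.choose j :=
    mod_cast Nat.choose_pos (Nat.lt_succ_iff.1 (mem_range.1 hj))
  simpa using le_mul_of_one_le_right (pow_nonneg hx j) h_choose

variable {P : Finset ℕ} {w : ℕ → ℕ → ℝ} {z : ℕ}

lemma abs_sum_prod_sub_mul_prod_residueMean_le (hP : (P : Set ℕ).Pairwise Nat.Coprime)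
    (hP0 : ∀ p ∈ P, p ≠ 0) (hw : ∀ p ∈ P, Periodic (w p) p) (h0 : ∀ p ∈ P, ∀ a, 0 ≤ w p a)
    (h1 : ∀ p ∈ P, ∀ a, w p a ≤ 1) (N : ℕ) :
    |∑ a ∈ range N, ∏ p ∈ P, w p a - N * ∏ p ∈ P, residueMean (w p) p| ≤ ∏ p ∈ P, (p : ℝ) := by
  rw [← residueMean_prod_of_pairwise_coprime hw hP0 hP, ← Nat.cast_prod]
  exact abs_sum_range_sub_mul_residueMean_le (periodic_prod hw)
    (fun a ↦ prod_nonneg fun p hp ↦ h0 p hp a)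
    (fun a ↦ prod_le_one (fun p hp ↦ h0 p hp a) fun p hp ↦ h1 p hp a)
    (Nat.pos_of_ne_zero (prod_ne_zero_iff.2 hP0)) N

lemma abs_sum_esymm_sub_mul_esymm_residueMean_le (hP : (P : Set ℕ).Pairwise Nat.Coprime)
    (hP1 : ∀ p ∈ P, 1 < p) (hz : ∀ p ∈ P, p ≤ z) (hw : ∀ p ∈ P, Periodic (w p) p)
    (h0 : ∀ p ∈ P, ∀ a, 0 ≤ w p a) (h1 : ∀ p ∈ P, ∀ a, w p a ≤ 1) (N j : ℕ) :
    |∑ a ∈ range N, (P.val.map fun p ↦ w p a).esymm j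
        - N * (P.val.map fun p ↦ residueMean (w p) p).esymm j| ≤ (((z - 1) * z : ℕ) : ℝ) ^ j := by
  have h_card : P.card ≤ z - 1 := by
    simpa using card_le_card fun p hp ↦ mem_Ioc.2 ⟨hP1 p hp, hz p hp⟩
  simp only [esymm_map_val]
  rw [sum_comm, mul_sum, ← sum_sub_distrib]
  calc |∑ t ∈ P.powersetCard j, (∑ a ∈ range N, ∏ p ∈ t, w p a
          - N * ∏ p ∈ t, residueMean (w p) p)|
      ≤ ∑ _t ∈ P.powersetCard j, (z : ℝ) ^ j := by
        refine (abs_sum_le_sum_abs _ _).trans (sum_le_sum fun t ht ↦ ?_)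
        obtain ⟨htP, rfl⟩ := mem_powersetCard.1 ht
        refine (abs_sum_prod_sub_mul_prod_residueMean_le (hP.mono (coe_subset.2 htP))
          (fun p hp ↦ (zero_lt_one.trans (hP1 p (htP hp))).ne') (fun p hp ↦ hw p (htP hp))
          (fun p hp ↦ h0 p (htP hp)) (fun p hp ↦ h1 p (htP hp)) N).trans ?_
        rw [← prod_const]
        exact prod_le_prod (fun p _ ↦ p.cast_nonneg) fun p hp ↦ mod_cast hz p (htP hp)
    _ = P.card.choose j * (z : ℝ) ^ j := by simp
    _ ≤ (((z - 1) * z : ℕ) : ℝ) ^ j := by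
        have := (Nat.choose_le_pow P.card j).trans (Nat.pow_le_pow_left h_card j)
        rw [Nat.cast_mul, mul_pow]
        gcongr
        exact_mod_cast this

lemma sum_bonferroniSum_le (hP : (P : Set ℕ).Pairwise Nat.Coprime) (hP1 : ∀ p ∈ P, 1 < p)
    (hz : ∀ p ∈ P, p ≤ z) (hz1 : 1 ≤ z) (hw : ∀ p ∈ P, Periodic (w p) p)
    (h0 : ∀ p ∈ P, ∀ a, 0 ≤ w p a) (h1 : ∀ p ∈ P, ∀ a, w p a ≤ 1) (N k : ℕ) :
    ∑ a ∈ range N, bonferroniSum (P.val.map fun p ↦ w p a) k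
      ≤ N * bonferroniSum (P.val.map fun p ↦ residueMean (w p) p) k + (z : ℝ) ^ (2 * k) := by
  rw [← sub_le_iff_le_add']
  calc ∑ a ∈ range N, bonferroniSum (P.val.map fun p ↦ w p a) k
        - N * bonferroniSum (P.val.map fun p ↦ residueMean (w p) p) k
      = ∑ j ∈ range (k + 1), (-1) ^ j * (∑ a ∈ range N, (P.val.map fun p ↦ w p a).esymm j
          - N * (P.val.map fun p ↦ residueMean (w p) p).esymm j) := by
        simp only [bonferroniSum, mul_sub, sum_sub_distrib]
        rw [sum_comm, mul_sum]
        simp only [mul_sum, mul_left_comm (N : ℝ)]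
    _ ≤ ∑ j ∈ range (k + 1), (((z - 1) * z : ℕ) : ℝ) ^ j := by
        refine sum_le_sum fun j _ ↦ (le_abs_self _).trans ?_
        rw [abs_mul, abs_neg_one_pow, one_mul]
        exact abs_sum_esymm_sub_mul_esymm_residueMean_le hP hP1 hz hw h0 h1 N j
    _ ≤ ((((z - 1) * z : ℕ) : ℝ) + 1) ^ k := sum_range_pow_le_add_one_pow (Nat.cast_nonneg _) k
    _ ≤ (z : ℝ) ^ (2 * k) := by
        rw [pow_mul, Nat.cast_mul, Nat.cast_pred hz1]
        have hz1' : (1 : ℝ) ≤ z := mod_cast hz1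
        gcongr
        nlinarith

theorem brun_pure_sieve (hP : (P : Set ℕ).Pairwise Nat.Coprime) (hP1 : ∀ p ∈ P, 1 < p)
    (hz : ∀ p ∈ P, p ≤ z) (hz1 : 1 ≤ z) (hw : ∀ p ∈ P, Periodic (w p) p)
    (h0 : ∀ p ∈ P, ∀ a, 0 ≤ w p a) (h1 : ∀ p ∈ P, ∀ a, w p a ≤ 1) {k N : ℕ} (hk : Even k)
    (hkL : 4 * ∑ p ∈ P, residueMean (w p) p ≤ k)
    (hN : exp (∑ p ∈ P, residueMean (w p) p) * (z : ℝ) ^ (2 * k) ≤ N) :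
    ∑ a ∈ range N, ∏ p ∈ P, (1 - w p a) ≤ 3 * N * exp (-∑ p ∈ P, residueMean (w p) p) := by
  set ρ : ℕ → ℝ := fun p ↦ residueMean (w p) p
  set L : ℝ := ∑ p ∈ P, ρ p
  have hρ0 (p) (hp : p ∈ P) : 0 ≤ ρ p := residueMean_nonneg (h0 p hp) p
  have hρ1 (p) (hp : p ∈ P) : ρ p ≤ 1 := residueMean_le_one (h1 p hp) p
  have h_main : bonferroniSum (P.val.map ρ) k ≤ 2 * exp (-L) := by
    calc bonferroniSum (P.val.map ρ) k ≤ ∏ p ∈ P, (1 - ρ p) + (P.val.map ρ).esymm (k + 1) := by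
          simpa [Multiset.map_map] using bonferroniSum_le_prod_one_sub_add_esymm
            (s := P.val.map ρ) (by simpa using hρ0) (by simpa using hρ1) hk
      _ ≤ exp (-L) + exp (-L) :=
          add_le_add (prod_one_sub_le_exp_neg_sum hρ1)
            (esymm_le_exp_neg_sum hρ0 (hkL.trans (by simp)))
      _ = 2 * exp (-L) := (two_mul _).symm
  have h_error : (z : ℝ) ^ (2 * k) ≤ N * exp (-L) := by
    rw [exp_neg, ← div_eq_mul_inv, le_div_iff₀ (exp_pos _), mul_comm]
    exact hN
  calc ∑ a ∈ range N, ∏ p ∈ P, (1 - w p a)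
      ≤ ∑ a ∈ range N, bonferroniSum (P.val.map fun p ↦ w p a) k := sum_le_sum fun a _ ↦ by
        simpa [Multiset.map_map] using prod_one_sub_le_bonferroniSum
          (s := P.val.map fun p ↦ w p a) (by simpa using fun p hp ↦ h0 p hp a)
          (by simpa using fun p hp ↦ h1 p hp a) hk
    _ ≤ N * bonferroniSum (P.val.map ρ) k + (z : ℝ) ^ (2 * k) :=
        sum_bonferroniSum_le hP hP1 hz hz1 hw h0 h1 N k
    _ ≤ 3 * N * exp (-L) := by
        linarith [mul_le_mul_of_nonneg_left h_main (Nat.cast_nonneg (α := ℝ) N)]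

end BrunSieve

section PrimeHarmonic

/-- The sum of the reciprocals of the elements of `P`: the logarithmic size of a set of primes,
which governs both the sieve and the number of prime factors taken from `P`. -/
noncomputable def reciprocalSum (P : Finset ℕ) : ℝ := ∑ p ∈ P, (p : ℝ)⁻¹

lemma reciprocalSum_nonneg (P : Finset ℕ) : 0 ≤ reciprocalSum P :=
  sum_nonneg fun _ _ ↦ by positivity

lemma reciprocalSum_mono {P Q : Finset ℕ} (h : P ⊆ Q) : reciprocalSum P ≤ reciprocalSum Q :=
  sum_le_sum_of_subset_of_nonneg h fun _ _ _ ↦ by positivity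

lemma sum_inv_sq_le_inv {P : Finset ℕ} {w : ℕ} (hw : w ≠ 0) (hP : ∀ p ∈ P, w < p) :
    ∑ p ∈ P, ((p : ℝ) ^ 2)⁻¹ ≤ (w : ℝ)⁻¹ := by
  have hsub : P ⊆ Ioc w (max w (P.sup id)) := fun p hp ↦
    mem_Ioc.2 ⟨hP p hp, (le_sup (f := id) hp).trans (le_max_right _ _)⟩
  calc ∑ p ∈ P, ((p : ℝ) ^ 2)⁻¹ ≤ ∑ p ∈ Ioc w (max w (P.sup id)), ((p : ℝ) ^ 2)⁻¹ :=
        sum_le_sum_of_subset_of_nonneg hsub fun _ _ _ ↦ by positivity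
    _ ≤ (w : ℝ)⁻¹ - ((max w (P.sup id) : ℕ) : ℝ)⁻¹ := sum_Ioc_inv_sq_le_sub hw (le_max_left _ _)
    _ ≤ (w : ℝ)⁻¹ := sub_le_self _ (by positivity)

lemma exp_neg_add_two_mul_sq_le_one_sub {x : ℝ} (hx : x ≤ 1 / 2) :
    exp (-(x + 2 * x ^ 2)) ≤ 1 - x := by
  rw [exp_neg]
  refine inv_le_of_inv_le₀ (by linarith) ?_
  calc (1 - x)⁻¹ ≤ x + 2 * x ^ 2 + 1 := by
        rw [inv_le_iff_one_le_mul₀ (by linarith)]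
        nlinarith [mul_nonneg (sq_nonneg x) (sub_nonneg.2 hx)]
    _ ≤ exp (x + 2 * x ^ 2) := add_one_le_exp _

lemma exp_neg_reciprocalSum_primesBelow_le (N : ℕ) :
    exp (-(reciprocalSum N.primesBelow + 2)) ≤ ∏ p ∈ N.primesBelow, (1 - (p : ℝ)⁻¹) := by
  have h_prime (p) (hp : p ∈ N.primesBelow) : 1 < p := (Nat.prime_of_mem_primesBelow hp).one_lt
  have h_sq := sum_inv_sq_le_inv one_ne_zero h_prime
  calc exp (-(reciprocalSum N.primesBelow + 2))
      ≤ exp (∑ p ∈ N.primesBelow, -((p : ℝ)⁻¹ + 2 * (p : ℝ)⁻¹ ^ 2)) := by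
        rw [exp_le_exp, sum_neg_distrib, sum_add_distrib, ← mul_sum, neg_le_neg_iff]
        simp only [inv_pow, reciprocalSum]
        norm_num at h_sq
        linarith
    _ ≤ ∏ p ∈ N.primesBelow, (1 - (p : ℝ)⁻¹) := by
        rw [exp_sum]
        refine prod_le_prod (fun _ _ ↦ (exp_pos _).le) fun p hp ↦ ?_
        refine exp_neg_add_two_mul_sq_le_one_sub ?_
        rw [one_div]
        exact inv_anti₀ two_pos (mod_cast h_prime p hp)

lemma harmonic_le_prod_primesBelow (n : ℕ) :
    (harmonic n : ℝ) ≤ ∏ p ∈ (n + 1).primesBelow, (1 - (p : ℝ)⁻¹)⁻¹ := by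
  let f : ℕ →* ℝ := invMonoidHom.comp (Nat.castRingHom ℝ).toMonoidHom
  have hf {p : ℕ} (hp : p.Prime) : ‖f p‖ < 1 := by
    simpa [f] using inv_lt_one_of_one_lt₀ (mod_cast hp.one_lt : (1 : ℝ) < p)
  obtain ⟨-, h_sum⟩ :=
    EulerProduct.summable_and_hasSum_smoothNumbers_prod_primesBelow_geometric hf (n + 1)
  have h_smooth (m) (hm : m ∈ Icc 1 n) : m ∈ (n + 1).smoothNumbers := by
    rw [mem_Icc] at hm
    exact Nat.mem_smoothNumbers_of_lt hm.1 (by lia)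
  calc (harmonic n : ℝ) = ∑ m ∈ (Icc 1 n).subtype (· ∈ (n + 1).smoothNumbers), f m := by
        rw [sum_subtype_of_mem f h_smooth, harmonic_eq_sum_Icc]
        simp [f]
    _ ≤ ∏ p ∈ (n + 1).primesBelow, (1 - (p : ℝ)⁻¹)⁻¹ :=
        sum_le_hasSum _ (fun m _ ↦ by simp [f]) h_sum

lemma log_le_exp_reciprocalSum_primesBelow (N : ℕ) :
    log N ≤ exp (reciprocalSum N.primesBelow + 2) := by
  cases N with
  | zero => simpa using (exp_pos _).le
  | succ n =>
    calc log (n + 1 : ℕ) ≤ harmonic n := log_add_one_le_harmonic n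
      _ ≤ ∏ p ∈ (n + 1).primesBelow, (1 - (p : ℝ)⁻¹)⁻¹ := harmonic_le_prod_primesBelow n
      _ ≤ exp (reciprocalSum (n + 1).primesBelow + 2) := by
        rw [prod_inv_distrib]
        refine inv_le_of_inv_le₀ (exp_pos _) ?_
        rw [← exp_neg]
        exact exp_neg_reciprocalSum_primesBelow_le (n + 1)

lemma sum_inv_primes_dyadic_le {t : ℕ} (ht : t ≠ 0) :
    ∑ p ∈ Ico (2 ^ t : ℕ) (2 ^ (t + 1)) with p.Prime, (p : ℝ)⁻¹ ≤ 4 / t := by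
  have h_theta : ∑ p ∈ Ico (2 ^ t : ℕ) (2 ^ (t + 1)) with p.Prime, log p ≤ log 4 * 2 ^ (t + 1) := by
    refine le_trans ?_ (Chebyshev.theta_le_log4_mul_x (x := 2 ^ (t + 1)) (by positivity))
    rw [Chebyshev.theta_eq_sum_Icc,
      show ⌊(2 : ℝ) ^ (t + 1)⌋₊ = 2 ^ (t + 1) from mod_cast Nat.floor_natCast _]
    refine sum_le_sum_of_subset_of_nonneg ?_ fun p _ _ ↦ log_natCast_nonneg p
    exact filter_subset_filter _ fun p hp ↦ mem_Icc.2 ⟨p.zero_le, (mem_Ico.1 hp).2.le⟩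
  calc ∑ p ∈ Ico (2 ^ t : ℕ) (2 ^ (t + 1)) with p.Prime, (p : ℝ)⁻¹
      ≤ ∑ p ∈ Ico (2 ^ t : ℕ) (2 ^ (t + 1)) with p.Prime, log p / (t * log 2 * 2 ^ t) := by
        refine sum_le_sum fun p hp ↦ ?_
        have hp' : (2 : ℝ) ^ t ≤ p := mod_cast (mem_Ico.1 (mem_filter.1 hp).1).1
        have h_log : t * log 2 ≤ log p := by
          rw [← log_pow]
          exact log_le_log (by positivity) hp'
        have hp0 : (0 : ℝ) < p := lt_of_lt_of_le (by positivity) hp'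
        rw [inv_eq_one_div, div_le_div_iff₀ hp0 (by positivity), one_mul]
        gcongr
    _ ≤ log 4 * 2 ^ (t + 1) / (t * log 2 * 2 ^ t) := by
        rw [← sum_div]
        gcongr
    _ = 4 / t := by
        rw [show (4 : ℝ) = 2 ^ 2 by norm_num, log_pow]
        field_simp
        ring

lemma reciprocalSum_primesBelow_two_pow_succ_le_harmonic (T : ℕ) :
    reciprocalSum (2 ^ (T + 1)).primesBelow ≤ 4 * harmonic T := by
  induction T with
  | zero => simp [reciprocalSum, show Nat.primesBelow 2 = ∅ by decide]
  | succ T ih =>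
    have h_split : reciprocalSum (2 ^ (T + 1 + 1)).primesBelow =
        reciprocalSum (2 ^ (T + 1)).primesBelow +
          ∑ p ∈ Ico (2 ^ (T + 1) : ℕ) (2 ^ (T + 1 + 1)) with p.Prime, (p : ℝ)⁻¹ := by
      simp only [reciprocalSum, Nat.primesBelow, sum_filter]
      exact (sum_range_add_sum_Ico _ (Nat.pow_le_pow_right two_pos (Nat.le_succ _))).symm
    rw [h_split, harmonic_succ]
    have := sum_inv_primes_dyadic_le T.succ_ne_zero
    push_cast at this ⊢
    rw [mul_add, ← div_eq_mul_inv]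
    linarith

lemma reciprocalSum_primesBelow_two_pow_le (T : ℕ) :
    reciprocalSum (2 ^ T).primesBelow ≤ 4 * (1 + log T) := by
  cases T with
  | zero => simp [reciprocalSum, show Nat.primesBelow 1 = ∅ by decide]
  | succ T =>
    have h_log : log T ≤ log (T + 1 : ℕ) := by
      rcases T.eq_zero_or_pos with rfl | hT
      · simp
      · exact log_le_log (mod_cast hT) (mod_cast T.le_succ)
    linarith [reciprocalSum_primesBelow_two_pow_succ_le_harmonic T, harmonic_le_one_add_log T]

end PrimeHarmonic

section Counting

open Classical in
/-- The number of elements of `S` in `{1, …, X}`. -/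
noncomputable def countUpTo (S : Set ℕ) (X : ℕ) : ℕ := #{x ∈ Ioc 0 X | x ∈ S}

lemma countUpTo_le_countUpTo {S T : Set ℕ} {X : ℕ} (h : ∀ x ∈ S, 0 < x → x ≤ X → x ∈ T) :
    countUpTo S X ≤ countUpTo T X := by
  refine card_le_card fun x hx ↦ ?_
  simp only [mem_filter, mem_Ioc] at hx ⊢
  exact ⟨hx.1, h x hx.2 hx.1.1 hx.1.2⟩

lemma countUpTo_mono {S T : Set ℕ} (h : S ⊆ T) (X : ℕ) : countUpTo S X ≤ countUpTo T X :=
  countUpTo_le_countUpTo fun _ hx _ _ ↦ h hx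

lemma countUpTo_biUnion_le {ι : Type*} (s : Finset ι) (S : ι → Set ℕ) (X : ℕ) :
    countUpTo (⋃ i ∈ s, S i) X ≤ ∑ i ∈ s, countUpTo (S i) X := by
  classical
  have h_union : {x ∈ Ioc 0 X | x ∈ ⋃ i ∈ s, S i} = s.biUnion fun i ↦ {x ∈ Ioc 0 X | x ∈ S i} := by
    ext x
    simp only [mem_filter, Set.mem_iUnion, mem_biUnion, exists_prop]
    tauto
  rw [countUpTo, h_union]
  exact card_biUnion_le

lemma countUpTo_union_le (S T : Set ℕ) (X : ℕ) :
    countUpTo (S ∪ T) X ≤ countUpTo S X + countUpTo T X := by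
  classical
  simp only [countUpTo, Set.mem_union, filter_or]
  exact card_union_le _ _

lemma countUpTo_compl_add (S : Set ℕ) (X : ℕ) : countUpTo Sᶜ X + countUpTo S X = X := by
  classical
  rw [add_comm, countUpTo, countUpTo]
  convert card_filter_add_card_filter_not (s := Ioc 0 X) (· ∈ S)
  rw [Nat.card_Ioc, Nat.sub_zero]

lemma countUpTo_setOf_dvd_and {a : ℕ} (ha : a ≠ 0) (S : Set ℕ) (X : ℕ) :
    countUpTo {x | a ∣ x ∧ x ∈ S} X = countUpTo {b | a * b ∈ S} (X / a) := by
  have ha' := Nat.pos_of_ne_zero ha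
  refine (card_nbij' (a * ·) (· / a) (fun b hb ↦ ?_) (fun x hx ↦ ?_) (fun b _ ↦ ?_)
    fun x hx ↦ ?_).symm
  · simp only [coe_filter, mem_Ioc, Set.mem_ofPred_eq, Nat.le_div_iff_mul_le ha'] at hb ⊢
    exact ⟨⟨Nat.mul_pos ha' hb.1.1, by linarith [hb.1.2]⟩, dvd_mul_right a b, hb.2⟩
  · simp only [coe_filter, mem_Ioc, Set.mem_ofPred_eq] at hx ⊢
    obtain ⟨⟨h_pos, h_le⟩, ⟨b, rfl⟩, hS⟩ := hx
    rw [Nat.mul_div_cancel_left b ha']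
    exact ⟨⟨Nat.pos_of_mul_pos_left h_pos, by rwa [Nat.le_div_iff_mul_le ha', mul_comm]⟩, hS⟩
  · exact Nat.mul_div_cancel_left b ha'
  · simp only [coe_filter, mem_Ioc, Set.mem_ofPred_eq] at hx
    exact Nat.mul_div_cancel' hx.2.1

lemma countUpTo_setOf_dvd (a X : ℕ) : countUpTo {x | a ∣ x} X = X / a := by
  rw [← Nat.Ioc_filter_dvd_card_eq_div, countUpTo]
  congr

lemma countUpTo_setOf_dvd_le (a X : ℕ) : (countUpTo {x | a ∣ x} X : ℝ) ≤ X * (a : ℝ)⁻¹ := by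
  rw [countUpTo_setOf_dvd, ← div_eq_mul_inv]
  exact Nat.cast_div_le

lemma countUpTo_le_sum_div {S : Set ℕ} {X : ℕ} {f : ℕ → ℝ} {c : ℝ} (hc : 0 < c) (hf : ∀ x, 0 ≤ f x)
    (h : ∀ x ∈ S, c ≤ f x) : countUpTo S X ≤ (∑ x ∈ Ioc 0 X, f x) / c := by
  classical
  rw [le_div_iff₀ hc, countUpTo, ← nsmul_eq_mul]
  exact (card_nsmul_le_sum _ f c fun x hx ↦ h x (mem_filter.1 hx).2).trans
    (sum_le_sum_of_subset_of_nonneg (filter_subset _ _) fun x _ _ ↦ hf x)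

end Counting

section Omega

/-- The number of elements of `P` dividing `k`. -/
def omegaOn (P : Finset ℕ) (k : ℕ) : ℕ := #{p ∈ P | p ∣ k}

lemma prod_one_add_ite_dvd {R : Type*} [CommSemiring R] (P : Finset ℕ) (c : R) (k : ℕ) :
    ∏ p ∈ P, (1 + if p ∣ k then c else 0) = (1 + c) ^ omegaOn P k := by
  simp only [omegaOn, ← prod_const, prod_filter]
  exact prod_congr rfl fun p _ ↦ by split_ifs <;> simp

variable {P : Finset ℕ} (hP : ∀ p ∈ P, p.Prime)
include hP

lemma omegaOn_mul {a b : ℕ} (hab : ∀ p ∈ P, ¬ p ^ 2 ∣ a * b) :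
    omegaOn P (a * b) = omegaOn P a + omegaOn P b := by
  rw [omegaOn, omegaOn, omegaOn, ← card_union_of_disjoint, ← filter_or]
  · exact congrArg _ (filter_congr fun p hp ↦ (hP p hp).dvd_mul)
  · refine disjoint_filter.2 fun p hp ha hb ↦ hab p hp ?_
    rw [sq]
    exact mul_dvd_mul ha hb

lemma sum_one_add_pow_omegaOn_le {c : ℝ} (hc : 0 ≤ c) (X : ℕ) :
    ∑ k ∈ Ioc 0 X, (1 + c) ^ omegaOn P k ≤ X * exp (c * reciprocalSum P) := by
  have h_subset (t) (ht : t ∈ P.powerset) :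
      ∑ k ∈ Ioc 0 X, ∏ p ∈ t, (if p ∣ k then c else 0) ≤ X * ∏ p ∈ t, c * (p : ℝ)⁻¹ := by
    have h_dvd (k : ℕ) : (∀ p ∈ t, p ∣ k) ↔ (∏ p ∈ t, p) ∣ k :=
      ⟨prod_primes_dvd k fun p hp ↦ (hP p (mem_powerset.1 ht hp)).prime,
        fun h p hp ↦ (dvd_prod_of_mem _ hp).trans h⟩
    calc ∑ k ∈ Ioc 0 X, ∏ p ∈ t, (if p ∣ k then c else 0)
        = (X / ∏ p ∈ t, p : ℕ) * c ^ #t := by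
          simp only [prod_ite_zero, prod_const, h_dvd]
          rw [← sum_filter, sum_const, Nat.Ioc_filter_dvd_card_eq_div, nsmul_eq_mul]
      _ ≤ X / (∏ p ∈ t, p : ℕ) * c ^ #t := by
          gcongr
          exact Nat.cast_div_le
      _ = X * ∏ p ∈ t, c * (p : ℝ)⁻¹ := by
          rw [prod_mul_distrib, prod_const, prod_inv_distrib, Nat.cast_prod]
          ring
  calc ∑ k ∈ Ioc 0 X, (1 + c) ^ omegaOn P k
      = ∑ t ∈ P.powerset, ∑ k ∈ Ioc 0 X, ∏ p ∈ t, (if p ∣ k then c else 0) := by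
        simp only [← prod_one_add_ite_dvd, prod_one_add]
        exact sum_comm
    _ ≤ X * ∏ p ∈ P, (1 + c * (p : ℝ)⁻¹) := by
        rw [prod_one_add, mul_sum]
        exact sum_le_sum h_subset
    _ ≤ X * exp (c * reciprocalSum P) := by
        rw [reciprocalSum, mul_sum]
        gcongr
        exact prod_one_add_le_exp_sum P fun p ↦ by positivity

-- Rankin's trick with weight `(4 / 3) ^ ω`; the exponent is `4 / 3 * (2 / 7) - 1 / 3 = 1 / 21`.
lemma countUpTo_omegaOn_gt_le (X : ℕ) :
    (countUpTo {k | 4 / 3 * reciprocalSum P < omegaOn P k} X : ℝ)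
      ≤ X * exp (-(1 / 21 * reciprocalSum P)) := by
  set L := reciprocalSum P
  have h_log : 2 / 7 ≤ log (1 + 1 / 3) := by
    have := le_log_one_add_of_nonneg (x := 1 / 3) (by norm_num)
    norm_num at this ⊢
    exact this
  calc (countUpTo {k | 4 / 3 * L < omegaOn P k} X : ℝ)
      ≤ (∑ k ∈ Ioc 0 X, (1 + 1 / 3) ^ omegaOn P k) / exp (8 / 21 * L) := by
        refine countUpTo_le_sum_div (exp_pos _) (fun k ↦ by positivity) fun k hk ↦ ?_
        rw [← exp_log (show (0 : ℝ) < 1 + 1 / 3 by norm_num), ← exp_nat_mul, exp_le_exp]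
        nlinarith [hk.out, reciprocalSum_nonneg P]
    _ ≤ X * exp (1 / 3 * L) / exp (8 / 21 * L) := by
        gcongr
        exact sum_one_add_pow_omegaOn_le hP (by norm_num) X
    _ = X * exp (-(1 / 21 * L)) := by
        rw [mul_div_assoc, ← exp_sub]
        ring_nf

omit hP in
lemma countUpTo_sq_dvd_le {w : ℕ} (hw : w ≠ 0) (hPw : ∀ p ∈ P, w < p) (X : ℕ) :
    (countUpTo {k | ∃ p ∈ P, p ^ 2 ∣ k} X : ℝ) ≤ X * (w : ℝ)⁻¹ := by
  have h_union : {k | ∃ p ∈ P, p ^ 2 ∣ k} = ⋃ p ∈ P, {k | p ^ 2 ∣ k} := by ext; simp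
  calc (countUpTo {k | ∃ p ∈ P, p ^ 2 ∣ k} X : ℝ)
      ≤ ∑ p ∈ P, (countUpTo {k | p ^ 2 ∣ k} X : ℝ) := by
        rw [h_union]
        exact_mod_cast countUpTo_biUnion_le P _ X
    _ ≤ ∑ p ∈ P, X * ((p : ℝ) ^ 2)⁻¹ :=
        sum_le_sum fun p _ ↦ by exact_mod_cast countUpTo_setOf_dvd_le (p ^ 2) X
    _ ≤ X * (w : ℝ)⁻¹ := by
        rw [← mul_sum]
        gcongr
        exact sum_inv_sq_le_inv hw hPw

end Omega

section SieveRange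

lemma sum_range_mul_add_of_coprime {R : Type*} [AddCommMonoid R] {f : ℕ → R} {d m : ℕ}
    (hf : Periodic f m) (hm : m ≠ 0) (hdm : d.Coprime m) (b : ℕ) :
    ∑ a ∈ range m, f (d * a + b) = ∑ a ∈ range m, f a := by
  have h_maps : Set.MapsTo (fun a ↦ (d * a + b) % m) (range m) (range m) := fun a _ ↦ by
    simpa using Nat.mod_lt _ (Nat.pos_of_ne_zero hm)
  have h_inj : Set.InjOn (fun a ↦ (d * a + b) % m) (range m) := fun a ha a' ha' h ↦ by
    have h_modEq : d * a ≡ d * a' [MOD m] := Nat.ModEq.add_right_cancel' b h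
    exact (h_modEq.cancel_left_of_coprime hdm.symm).eq_of_lt_of_lt
      (mem_range.1 ha) (mem_range.1 ha')
  exact sum_nbij _ h_maps h_inj (surjOn_of_injOn_of_card_le _ h_maps h_inj le_rfl)
    fun a _ ↦ (hf.map_mod_nat _).symm

lemma residueMean_comp_mul_add {f : ℕ → ℝ} {d m : ℕ} (hf : Periodic f m) (hm : m ≠ 0)
    (hdm : d.Coprime m) (b : ℕ) : residueMean (fun a ↦ f (d * a + b)) m = residueMean f m := by
  rw [residueMean, residueMean, sum_range_mul_add_of_coprime hf hm hdm]

lemma residueMean_add (f g : ℕ → ℝ) (m : ℕ) :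
    residueMean (fun a ↦ f a + g a) m = residueMean f m + residueMean g m := by
  rw [residueMean, sum_add_distrib, add_div]; rfl

lemma periodic_ite_dvd {R : Type*} [Zero R] (p : ℕ) (c : R) :
    Periodic (fun a ↦ if p ∣ a then c else 0) p := fun a ↦ by
  simp only [Nat.dvd_add_self_right]

lemma residueMean_ite_dvd {p : ℕ} (hp : p ≠ 0) (c : ℝ) :
    residueMean (fun a ↦ if p ∣ a then c else 0) p = c * (p : ℝ)⁻¹ := by
  rw [residueMean, sum_eq_single_of_mem 0 (mem_range.2 (Nat.pos_of_ne_zero hp)),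
    if_pos (dvd_zero p), div_eq_mul_inv]
  exact fun a ha ha0 ↦ if_neg <| Nat.not_dvd_of_pos_of_lt (Nat.pos_of_ne_zero ha0) (mem_range.1 ha)

lemma half_pow_omegaOn (P : Finset ℕ) (a : ℕ) :
    (1 / 2 : ℝ) ^ omegaOn P a = ∏ p ∈ P, (1 - if p ∣ a then (1 / 2 : ℝ) else 0) := by
  rw [show (1 / 2 : ℝ) = 1 + -(1 / 2) by norm_num, ← prod_one_add_ite_dvd]
  exact prod_congr rfl fun p _ ↦ by split_ifs <;> norm_num

/-- Primes `P` and a level `k` for which Brun's sieve applies on every interval of length at least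
`Y` to weights of mean at most `3 / (2 * p)` modulo each `p ∈ P`. -/
structure IsSieveRange (P : Finset ℕ) (z k Y : ℕ) : Prop where
  prime : ∀ p ∈ P, p.Prime
  le : ∀ p ∈ P, p ≤ z
  one_le : 1 ≤ z
  le_length : z ≤ Y
  even : Even k
  reciprocalSum_le : 6 * reciprocalSum P ≤ k
  exp_mul_pow_le : exp (3 / 2 * reciprocalSum P) * (z : ℝ) ^ (2 * k) ≤ Y

namespace IsSieveRange

variable {P : Finset ℕ} {z k Y : ℕ} (h : IsSieveRange P z k Y)
include h

lemma sum_prod_one_sub_le {w : ℕ → ℕ → ℝ} {c : ℝ} (hc : c ≤ 3 / 2)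
    (hw : ∀ p ∈ P, Periodic (w p) p) (h0 : ∀ p ∈ P, ∀ a, 0 ≤ w p a) (h1 : ∀ p ∈ P, ∀ a, w p a ≤ 1)
    (h_mean : ∀ p ∈ P, residueMean (w p) p = c * (p : ℝ)⁻¹) {N : ℕ} (hN : Y ≤ N) :
    ∑ a ∈ range N, ∏ p ∈ P, (1 - w p a) ≤ 3 * N * exp (-(c * reciprocalSum P)) := by
  have h_sum : ∑ p ∈ P, residueMean (w p) p = c * reciprocalSum P := by
    rw [reciprocalSum, mul_sum, sum_congr rfl h_mean]
  have h_le : c * reciprocalSum P ≤ 3 / 2 * reciprocalSum P := by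
    gcongr
    exact reciprocalSum_nonneg P
  rw [← h_sum]
  refine brun_pure_sieve (fun p hp q hq ↦ (Nat.coprime_primes (h.prime p hp) (h.prime q hq)).2)
    (fun p hp ↦ (h.prime p hp).one_lt) h.le h.one_le hw h0 h1 h.even ?_ ?_
  · rw [h_sum]
    linarith [h.reciprocalSum_le]
  · rw [h_sum]
    calc exp (c * reciprocalSum P) * (z : ℝ) ^ (2 * k)
        ≤ exp (3 / 2 * reciprocalSum P) * (z : ℝ) ^ (2 * k) := by gcongr
      _ ≤ N := h.exp_mul_pow_le.trans (mod_cast hN)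

lemma sum_half_pow_omegaOn_le {N : ℕ} (hN : Y ≤ N) :
    ∑ a ∈ range N, (1 / 2 : ℝ) ^ omegaOn P a ≤ 3 * N * exp (-(1 / 2 * reciprocalSum P)) := by
  simp only [half_pow_omegaOn]
  refine h.sum_prod_one_sub_le (by norm_num) (fun p _ ↦ periodic_ite_dvd p _) (fun p _ a ↦ ?_)
    (fun p _ a ↦ ?_) (fun p hp ↦ residueMean_ite_dvd (h.prime p hp).ne_zero _) hN
  all_goals split_ifs <;> norm_num

lemma sum_half_pow_omegaOn_of_not_dvd_le {d : ℕ} (hd : ∀ p ∈ P, d.Coprime p) {N : ℕ} (hN : Y ≤ N) :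
    ∑ a ∈ range N with ∀ p ∈ P, ¬ p ∣ d * a + 1, (1 / 2 : ℝ) ^ omegaOn P a
      ≤ 3 * N * exp (-(3 / 2 * reciprocalSum P)) := by
  set w : ℕ → ℕ → ℝ := fun p a ↦
    (if p ∣ d * a + 1 then (1 : ℝ) else 0) + if p ∣ a then (1 / 2 : ℝ) else 0 with hw
  have h0 (p) (_ : p ∈ P) (a : ℕ) : 0 ≤ w p a := by
    simp only [hw]
    split_ifs <;> norm_num
  have h1 (p) (hp : p ∈ P) (a : ℕ) : w p a ≤ 1 := by
    have h_not_both : ¬ (p ∣ d * a + 1 ∧ p ∣ a) := fun ⟨h_lin, ha⟩ ↦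
      (h.prime p hp).one_lt.ne' <| Nat.dvd_one.1 <| (Nat.dvd_add_right (ha.mul_left d)).1 h_lin
    simp only [hw]
    split_ifs <;> first | tauto | norm_num
  have h_periodic (p) (_ : p ∈ P) : Periodic (w p) p := fun a ↦ by
    simp only [hw, mul_add, add_right_comm (d * a) (d * p), Nat.dvd_add_self_right,
      Nat.dvd_add_left (dvd_mul_left p d)]
  have h_mean (p) (hp : p ∈ P) : residueMean (w p) p = 3 / 2 * (p : ℝ)⁻¹ := by
    have hp0 := (h.prime p hp).ne_zero
    rw [residueMean_add, residueMean_comp_mul_add (f := fun a ↦ if p ∣ a then (1 : ℝ) else 0)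
      (periodic_ite_dvd p 1) hp0 (hd p hp), residueMean_ite_dvd hp0, residueMean_ite_dvd hp0]
    ring
  have h_prod (a : ℕ) (ha : ∀ p ∈ P, ¬ p ∣ d * a + 1) :
      (1 / 2 : ℝ) ^ omegaOn P a = ∏ p ∈ P, (1 - w p a) := by
    rw [half_pow_omegaOn]
    exact prod_congr rfl fun p hp ↦ by simp only [hw, if_neg (ha p hp), zero_add]
  calc ∑ a ∈ range N with ∀ p ∈ P, ¬ p ∣ d * a + 1, (1 / 2 : ℝ) ^ omegaOn P a
      = ∑ a ∈ range N with ∀ p ∈ P, ¬ p ∣ d * a + 1, ∏ p ∈ P, (1 - w p a) :=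
        sum_congr rfl fun a ha ↦ h_prod a (mem_filter.1 ha).2
    _ ≤ ∑ a ∈ range N, ∏ p ∈ P, (1 - w p a) :=
        sum_le_sum_of_subset_of_nonneg (filter_subset _ _) fun a _ _ ↦
          prod_nonneg fun p hp ↦ sub_nonneg.2 (h1 p hp a)
    _ ≤ 3 * N * exp (-(3 / 2 * reciprocalSum P)) :=
        h.sum_prod_one_sub_le le_rfl h_periodic h0 h1 h_mean hN

end IsSieveRange

end SieveRange

section Multiples

/-- The natural numbers divisible by some element of `A`. -/
def multiplesOf (A : Set ℕ) : Set ℕ := {x | ∃ a ∈ A, a ∣ x}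

/-- The quotients `(p - 1) / d` with `p` prime and `d ≤ n` a positive divisor of `p - 1`. -/
def shiftedPrimeQuotients (n : ℕ) : Set ℕ := {a | ∃ d ∈ Icc 1 n, (d * a + 1).Prime}

lemma sum_Ico_two_pow_le {f : ℕ → ℝ} {c : ℝ} (hc : 0 ≤ c) {i : ℕ}
    (hf : ∀ j ≥ i, ∑ a ∈ Ico (2 ^ j) (2 ^ (j + 1)), f a ≤ c) (j : ℕ) :
    ∑ a ∈ Ico (2 ^ i) (2 ^ j), f a ≤ j * c := by
  induction j with
  | zero =>
    rw [Ico_eq_empty_of_le (Nat.pow_le_pow_right two_pos (Nat.zero_le i))]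
    simp
  | succ j ih =>
    rcases le_or_gt i j with hij | hij
    · rw [← sum_Ico_consecutive f (Nat.pow_le_pow_right two_pos hij)
        (Nat.pow_le_pow_right two_pos j.le_succ)]
      push_cast
      linarith [hf j hij]
    · rw [Ico_eq_empty_of_le (Nat.pow_le_pow_right two_pos hij)]
      positivity

namespace IsSieveRange

variable {P : Finset ℕ} {z k Y : ℕ} (h : IsSieveRange P z k Y)
include h

lemma sum_half_pow_omegaOn_div_le {d i : ℕ} (hd0 : d ≠ 0) (hd : ∀ p ∈ P, d.Coprime p)
    (hi : Y ≤ 2 ^ i) (j : ℕ) :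
    ∑ a ∈ Ico (2 ^ i) (2 ^ j) with (d * a + 1).Prime, (1 / 2 : ℝ) ^ omegaOn P a / a
      ≤ j * (6 * exp (-(3 / 2 * reciprocalSum P))) := by
  rw [sum_filter]
  refine sum_Ico_two_pow_le (by positivity) (fun j hij ↦ ?_) j
  rw [← sum_filter]
  have hYj : Y ≤ 2 ^ j := hi.trans (Nat.pow_le_pow_right two_pos hij)
  have h_not_dvd {a : ℕ} (ha : 2 ^ j ≤ a) (h_prime : (d * a + 1).Prime) (p) (hp : p ∈ P) :
      ¬ p ∣ d * a + 1 := fun h_dvd ↦ by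
    have h_eq := (Nat.prime_dvd_prime_iff_eq (h.prime p hp) h_prime).1 h_dvd
    have h_le : a ≤ d * a := Nat.le_mul_of_pos_left a (Nat.pos_of_ne_zero hd0)
    have := h.le p hp
    have := h.le_length
    omega
  calc ∑ a ∈ Ico (2 ^ j) (2 ^ (j + 1)) with (d * a + 1).Prime, (1 / 2 : ℝ) ^ omegaOn P a / a
      ≤ ∑ a ∈ Ico (2 ^ j) (2 ^ (j + 1)) with (d * a + 1).Prime,
          (1 / 2 : ℝ) ^ omegaOn P a / 2 ^ j := by
        refine sum_le_sum fun a ha ↦ ?_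
        gcongr
        exact_mod_cast (mem_Ico.1 (mem_filter.1 ha).1).1
    _ ≤ ∑ a ∈ range (2 ^ (j + 1)) with ∀ p ∈ P, ¬ p ∣ d * a + 1,
          (1 / 2 : ℝ) ^ omegaOn P a / 2 ^ j := by
        refine sum_le_sum_of_subset_of_nonneg (fun a ha ↦ ?_) fun a _ _ ↦ by positivity
        obtain ⟨ha, h_prime⟩ := mem_filter.1 ha
        exact mem_filter.2 ⟨mem_range.2 (mem_Ico.1 ha).2, h_not_dvd (mem_Ico.1 ha).1 h_prime⟩
    _ ≤ 3 * (2 ^ (j + 1) : ℕ) * exp (-(3 / 2 * reciprocalSum P)) / 2 ^ j := by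
        rw [← sum_div]
        gcongr
        exact h.sum_half_pow_omegaOn_of_not_dvd_le hd
          (hYj.trans (Nat.pow_le_pow_right two_pos j.le_succ))
    _ = 6 * exp (-(3 / 2 * reciprocalSum P)) := by
        push_cast
        field_simp
        ring

end IsSieveRange

/-- The integers that are typical with respect to the primes in `P`: divisible by no `p ^ 2` and by
not many more than the expected number `reciprocalSum P` of `p ∈ P`. -/
def regularOn (P : Finset ℕ) : Set ℕ :=
  {x | (∀ p ∈ P, ¬ p ^ 2 ∣ x) ∧ omegaOn P x ≤ 4 / 3 * reciprocalSum P}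

lemma countUpTo_compl_regularOn_le {P : Finset ℕ} (hP : ∀ p ∈ P, p.Prime) {w : ℕ} (hw : w ≠ 0)
    (hPw : ∀ p ∈ P, w < p) (X : ℕ) :
    (countUpTo (regularOn P)ᶜ X : ℝ)
      ≤ X * (w : ℝ)⁻¹ + X * exp (-(1 / 21 * reciprocalSum P)) := by
  have h_compl : (regularOn P)ᶜ
      = {x | ∃ p ∈ P, p ^ 2 ∣ x} ∪ {x | 4 / 3 * reciprocalSum P < omegaOn P x} := by
    rw [regularOn, Set.ofPred_and, Set.compl_inter]
    congr 1 <;> ext x <;> simp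
  calc (countUpTo (regularOn P)ᶜ X : ℝ)
      ≤ countUpTo {x | ∃ p ∈ P, p ^ 2 ∣ x} X
        + countUpTo {x | 4 / 3 * reciprocalSum P < omegaOn P x} X := by
        rw [h_compl]
        exact_mod_cast countUpTo_union_le _ _ X
    _ ≤ _ := add_le_add (countUpTo_sq_dvd_le hw hPw X) (countUpTo_omegaOn_gt_le hP X)

lemma exp_neg_le_half_pow_omegaOn {P : Finset ℕ} {x : ℕ} (hx : x ∈ regularOn P) :
    exp (-(4 / 3 * log 2 * reciprocalSum P)) ≤ (1 / 2 : ℝ) ^ omegaOn P x := by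
  rw [one_div, inv_pow, exp_neg]
  gcongr
  conv_lhs => rw [← exp_log (two_pos (α := ℝ)), ← exp_nat_mul]
  rw [exp_le_exp]
  nlinarith [hx.2, log_pos one_lt_two]

namespace IsSieveRange

variable {P : Finset ℕ} {z k Y : ℕ} (h : IsSieveRange P z k Y)
include h

lemma countUpTo_dvd_and_mem_regularOn_le {a X : ℕ} (ha : a ≠ 0) (haX : Y * a ≤ X) :
    (countUpTo {x | a ∣ x ∧ x ∈ regularOn P} X : ℝ)
      ≤ X * (6 * exp ((4 / 3 * log 2 - 1 / 2) * reciprocalSum P))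
        * ((1 / 2 : ℝ) ^ omegaOn P a / a) := by
  set L := reciprocalSum P
  have hYX : Y ≤ X / a := (Nat.le_div_iff_mul_le (Nat.pos_of_ne_zero ha)).2 haX
  have h_len : ((X / a + 1 : ℕ) : ℝ) ≤ 2 * (X / a) := by
    have h_one : (1 : ℝ) ≤ (X / a : ℕ) := mod_cast h.one_le.trans (h.le_length.trans hYX)
    push_cast
    linarith [Nat.cast_div_le (α := ℝ) (m := X) (n := a)]
  have h_lower (b) (hb : b ∈ {b | a * b ∈ regularOn P}) :
      exp (-(4 / 3 * log 2 * L)) / (1 / 2 : ℝ) ^ omegaOn P a ≤ (1 / 2 : ℝ) ^ omegaOn P b := by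
    rw [div_le_iff₀' (by positivity), ← pow_add, ← omegaOn_mul h.prime hb.out.1]
    exact exp_neg_le_half_pow_omegaOn hb
  calc (countUpTo {x | a ∣ x ∧ x ∈ regularOn P} X : ℝ)
      ≤ (∑ b ∈ Ioc 0 (X / a), (1 / 2 : ℝ) ^ omegaOn P b)
          / (exp (-(4 / 3 * log 2 * L)) / (1 / 2 : ℝ) ^ omegaOn P a) := by
        rw [countUpTo_setOf_dvd_and ha]
        exact countUpTo_le_sum_div (by positivity) (fun b ↦ by positivity) h_lower
    _ ≤ 3 * (2 * (X / a)) * exp (-(1 / 2 * L))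
          / (exp (-(4 / 3 * log 2 * L)) / (1 / 2 : ℝ) ^ omegaOn P a) := by
        gcongr
        calc ∑ b ∈ Ioc 0 (X / a), (1 / 2 : ℝ) ^ omegaOn P b
            ≤ ∑ b ∈ range (X / a + 1), (1 / 2 : ℝ) ^ omegaOn P b :=
              sum_le_sum_of_subset_of_nonneg
                (fun b hb ↦ mem_range_succ_iff.2 (mem_Ioc.1 hb).2) fun b _ _ ↦ by positivity
          _ ≤ 3 * (X / a + 1 : ℕ) * exp (-(1 / 2 * L)) := h.sum_half_pow_omegaOn_le (by omega)
          _ ≤ 3 * (2 * (X / a)) * exp (-(1 / 2 * L)) := by gcongr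
    _ = X * (6 * exp ((4 / 3 * log 2 - 1 / 2) * L)) * ((1 / 2 : ℝ) ^ omegaOn P a / a) := by
        rw [sub_mul, sub_eq_neg_add, exp_add, exp_neg (4 / 3 * log 2 * L)]
        field_simp
        ring

lemma countUpTo_multiplesOf_inter_regularOn_le {d i : ℕ} (hd0 : d ≠ 0)
    (hd : ∀ p ∈ P, d.Coprime p) (hi : Y ≤ 2 ^ i) (j X : ℕ) :
    (countUpTo (multiplesOf {a | a ∈ Ico (2 ^ i) (2 ^ j) ∧ (d * a + 1).Prime ∧ Y * a ≤ X}
        ∩ regularOn P) X : ℝ)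
      ≤ X * (36 * j * exp (-((2 - 4 / 3 * log 2) * reciprocalSum P))) := by
  set L := reciprocalSum P
  set E := 6 * exp ((4 / 3 * log 2 - 1 / 2) * L) with hE
  set B : Finset ℕ := {a ∈ Ico (2 ^ i) (2 ^ j) | (d * a + 1).Prime}
  have h_cover : multiplesOf {a | a ∈ Ico (2 ^ i) (2 ^ j) ∧ (d * a + 1).Prime ∧ Y * a ≤ X}
      ∩ regularOn P ⊆ ⋃ a ∈ B.filter (Y * · ≤ X), {x | a ∣ x ∧ x ∈ regularOn P} := by
    rintro x ⟨⟨a, ⟨ha, h_prime, haX⟩, hax⟩, hx⟩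
    exact Set.mem_biUnion (x := a) (mem_filter.2 ⟨mem_filter.2 ⟨ha, h_prime⟩, haX⟩) ⟨hax, hx⟩
  calc (countUpTo (multiplesOf _ ∩ regularOn P) X : ℝ)
      ≤ ∑ a ∈ B.filter (Y * · ≤ X), (countUpTo {x | a ∣ x ∧ x ∈ regularOn P} X : ℝ) := by
        exact_mod_cast (countUpTo_mono h_cover X).trans (countUpTo_biUnion_le _ _ X)
    _ ≤ ∑ a ∈ B.filter (Y * · ≤ X), X * E * ((1 / 2 : ℝ) ^ omegaOn P a / a) := by
        refine sum_le_sum fun a ha ↦ ?_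
        obtain ⟨haB, haX⟩ := mem_filter.1 ha
        have ha_ge : 2 ^ i ≤ a := (mem_Ico.1 (mem_filter.1 haB).1).1
        exact h.countUpTo_dvd_and_mem_regularOn_le ((Nat.two_pow_pos i).trans_le ha_ge).ne' haX
    _ ≤ ∑ a ∈ B, X * E * ((1 / 2 : ℝ) ^ omegaOn P a / a) :=
        sum_le_sum_of_subset_of_nonneg (filter_subset _ _) fun a _ _ ↦ by positivity
    _ ≤ X * E * (j * (6 * exp (-(3 / 2 * L)))) := by
        rw [← mul_sum]
        gcongr
        exact h.sum_half_pow_omegaOn_div_le hd0 hd hi j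
    _ = X * (36 * j * (exp ((4 / 3 * log 2 - 1 / 2) * L) * exp (-(3 / 2 * L)))) := by
        rw [hE]
        ring
    _ = X * (36 * j * exp (-((2 - 4 / 3 * log 2) * L))) := by
        rw [← exp_add]
        ring_nf

lemma countUpTo_multiplesOf_le {n w i j X : ℕ} (hw : w ≠ 0) (hnw : n ≤ w) (hPw : ∀ p ∈ P, w < p)
    (hi : Y ≤ 2 ^ i) {A : Set ℕ} (hA : A ⊆ shiftedPrimeQuotients n)
    (hA_mem : ∀ a ∈ A, a ∈ Ico (2 ^ i) (2 ^ j)) (hAX : ∀ a ∈ A, Y * a ≤ X) :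
    (countUpTo (multiplesOf A) X : ℝ) ≤ X * ((w : ℝ)⁻¹ + exp (-(1 / 21 * reciprocalSum P))
      + 36 * n * j * exp (-((2 - 4 / 3 * log 2) * reciprocalSum P))) := by
  set L := reciprocalSum P
  set M : ℕ → Set ℕ := fun d ↦
    multiplesOf {a | a ∈ Ico (2 ^ i) (2 ^ j) ∧ (d * a + 1).Prime ∧ Y * a ≤ X} ∩ regularOn P
  have h_cover : multiplesOf A ⊆ (regularOn P)ᶜ ∪ ⋃ d ∈ Icc 1 n, M d := by
    rintro x ⟨a, ha, hax⟩
    obtain ⟨d, hd, h_prime⟩ := hA ha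
    by_cases hx : x ∈ regularOn P
    · exact Or.inr (Set.mem_biUnion hd ⟨⟨a, ⟨hA_mem a ha, h_prime, hAX a ha⟩, hax⟩, hx⟩)
    · exact Or.inl hx
  have h_M (d) (hd : d ∈ Icc 1 n) :
      (countUpTo (M d) X : ℝ) ≤ X * (36 * j * exp (-((2 - 4 / 3 * log 2) * L))) := by
    obtain ⟨hd1, hdn⟩ := mem_Icc.1 hd
    refine h.countUpTo_multiplesOf_inter_regularOn_le (by omega) (fun p hp ↦ ?_) hi j X
    have hdp : d < p := hdn.trans_lt (hnw.trans_lt (hPw p hp))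
    exact (Nat.coprime_of_lt_prime (by omega) hdp (h.prime p hp)).symm
  calc (countUpTo (multiplesOf A) X : ℝ)
      ≤ countUpTo (regularOn P)ᶜ X + ∑ d ∈ Icc 1 n, (countUpTo (M d) X : ℝ) := by
        exact_mod_cast (countUpTo_mono h_cover X).trans <| (countUpTo_union_le _ _ X).trans <|
          Nat.add_le_add_left (countUpTo_biUnion_le _ _ X) _
    _ ≤ X * (w : ℝ)⁻¹ + X * exp (-(1 / 21 * L))
          + ∑ _d ∈ Icc 1 n, X * (36 * j * exp (-((2 - 4 / 3 * log 2) * L))) :=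
        add_le_add (countUpTo_compl_regularOn_le h.prime hw hPw X) (sum_le_sum h_M)
    _ = _ := by
        rw [sum_const, Nat.card_Icc, Nat.add_sub_cancel, nsmul_eq_mul]
        ring

end IsSieveRange

end Multiples

section Blocks

/-- The start of the `s`-th block: quotients are grouped into the blocks
`[blockStart s, blockStart (s + 1))`. -/
def blockStart (s : ℕ) : ℕ := 2 ^ 2 ^ (100 * s)

/-- The index of the block containing `a`. -/
def blockIndex (a : ℕ) : ℕ := Nat.log 2 (Nat.log 2 a) / 100

/-- The upper end of the range of primes used to sieve the `s`-th block. -/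
def sieveLimit (s : ℕ) : ℕ := 2 ^ 2 ^ (99 * s)

/-- The primes used to sieve the `s`-th block. -/
def sievePrimes (s : ℕ) : Finset ℕ := {p ∈ (sieveLimit s).primesBelow | 2 ^ (2 * s) < p}

/-- The minimal length of an interval on which the sieve by `sievePrimes s` is used. -/
def sieveLength (s : ℕ) : ℕ := 2 ^ (5000 * s * 2 ^ (99 * s))

lemma le_blockIndex_iff {s a : ℕ} (hs : s ≠ 0) : s ≤ blockIndex a ↔ blockStart s ≤ a := by
  have h_pos : 0 < 100 * s := by positivity
  have h_log {m b : ℕ} (hm : 0 < m) : m ≤ Nat.log 2 b ↔ 2 ^ m ≤ b := by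
    rcases eq_or_ne b 0 with rfl | hb
    · simp [hm.ne']
    · exact Nat.le_log_iff_pow_le one_lt_two hb
  rw [blockIndex, blockStart, Nat.le_div_iff_mul_le (by norm_num), mul_comm, h_log h_pos,
    h_log (by positivity)]

lemma prime_of_mem_sievePrimes {s p : ℕ} (hp : p ∈ sievePrimes s) : p.Prime :=
  Nat.prime_of_mem_primesBelow (mem_filter.1 hp).1

lemma reciprocalSum_sievePrimes_le {s : ℕ} (hs : 1 ≤ s) :
    reciprocalSum (sievePrimes s) ≤ 282 * s := by
  have hs' : (1 : ℝ) ≤ s := mod_cast hs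
  calc reciprocalSum (sievePrimes s)
      ≤ reciprocalSum (2 ^ 2 ^ (99 * s)).primesBelow := reciprocalSum_mono (filter_subset _ _)
    _ ≤ 4 * (1 + log (2 ^ (99 * s) : ℕ)) := reciprocalSum_primesBelow_two_pow_le _
    _ = 4 * (1 + 99 * s * log 2) := by push_cast; rw [log_pow]; push_cast; rfl
    _ ≤ 282 * s := by nlinarith [log_two_lt_d9]

lemma reciprocalSum_primesBelow_sieveLimit_le (s : ℕ) :
    reciprocalSum (sieveLimit s).primesBelow
      ≤ reciprocalSum (sievePrimes s) + reciprocalSum (2 ^ (2 * s + 1)).primesBelow := by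
  have h_split : (sieveLimit s).primesBelow ⊆ sievePrimes s ∪ (2 ^ (2 * s + 1)).primesBelow := by
    intro p hp
    rcases lt_or_ge (2 ^ (2 * s)) p with h_large | h_small
    · exact mem_union_left _ (mem_filter.2 ⟨hp, h_large⟩)
    · exact mem_union_right _ (Nat.mem_primesBelow.2
        ⟨h_small.trans_lt (Nat.pow_lt_pow_right one_lt_two (Nat.lt_succ_self _)),
          Nat.prime_of_mem_primesBelow hp⟩)
  refine (reciprocalSum_mono h_split).trans ?_
  rw [reciprocalSum, reciprocalSum, reciprocalSum, ← sum_union_inter]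
  exact le_add_of_nonneg_right (sum_nonneg fun p _ ↦ by positivity)

lemma le_reciprocalSum_sievePrimes {s : ℕ} (hs : 200 ≤ s) :
    97 * s * log 2 ≤ reciprocalSum (sievePrimes s) := by
  have hs' : (200 : ℝ) ≤ s := mod_cast hs
  have h_log_two : exp (-1) ≤ log 2 := by
    rw [exp_neg]
    refine (inv_anti₀ (by norm_num) exp_one_gt_d9.le).trans ?_
    linarith [log_two_gt_d9]
  have h_lower : 99 * s * log 2 - 3 ≤ reciprocalSum (sieveLimit s).primesBelow := by
    have h_exp : exp (99 * s * log 2 - 1) ≤ exp (reciprocalSum (sieveLimit s).primesBelow + 2) :=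
      calc exp (99 * s * log 2 - 1) = 2 ^ (99 * s) * exp (-1) := by
            rw [sub_eq_add_neg, exp_add, ← exp_log (two_pos (α := ℝ)), ← exp_nat_mul, log_exp]
            push_cast
            rfl
        _ ≤ 2 ^ (99 * s) * log 2 := by gcongr
        _ = log (sieveLimit s) := by
            rw [sieveLimit]
            push_cast
            rw [log_pow]
            push_cast
            rfl
        _ ≤ _ := log_le_exp_reciprocalSum_primesBelow _
    linarith [exp_le_exp.1 h_exp]
  have h_small :
      reciprocalSum (2 ^ (2 * s + 1)).primesBelow ≤ 4 * ((2 * s + 1) / 16 + 4 * log 2) := by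
    have h_log : log ((2 * s + 1) / 16) ≤ (2 * s + 1) / 16 - 1 :=
      log_le_sub_one_of_pos (by positivity)
    rw [log_div (by positivity) (by norm_num), show (16 : ℝ) = 2 ^ 4 by norm_num, log_pow] at h_log
    have h_dyadic := reciprocalSum_primesBelow_two_pow_le (2 * s + 1)
    push_cast at h_log h_dyadic
    linarith
  nlinarith [log_two_gt_d9, log_two_lt_d9, reciprocalSum_primesBelow_sieveLimit_le s]

lemma cube_le_two_pow {s : ℕ} (hs : 10 ≤ s) : s ^ 3 ≤ 2 ^ s := by
  induction s, hs using Nat.le_induction with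
  | base => norm_num
  | succ m hm ih =>
    have h_sq : 10 * m ≤ m ^ 2 := by nlinarith
    have h_cube : 10 * m ^ 2 ≤ m ^ 3 := by nlinarith
    calc (m + 1) ^ 3 = m ^ 3 + 3 * m ^ 2 + 3 * m + 1 := by ring
      _ ≤ 2 * m ^ 3 := by omega
      _ ≤ 2 ^ (m + 1) := by omega

lemma sieveLength_pow_le_blockStart {s Q : ℕ} (hs : 10 ≤ s) (hQ : 5000 * Q ≤ s ^ 2) :
    sieveLength s ^ Q ≤ blockStart s := by
  rw [sieveLength, blockStart, ← pow_mul]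
  refine Nat.pow_le_pow_right two_pos ?_
  calc 5000 * s * 2 ^ (99 * s) * Q = 5000 * Q * s * 2 ^ (99 * s) := by ring
    _ ≤ s ^ 2 * s * 2 ^ (99 * s) := by gcongr
    _ ≤ 2 ^ s * 2 ^ (99 * s) := Nat.mul_le_mul_right _ (cube_le_two_pow hs)
    _ = 2 ^ (100 * s) := by
      rw [← pow_add]
      ring_nf

lemma exp_neg_le_half_pow {t : ℝ} {m : ℕ} (h : m * log 2 ≤ t) : exp (-t) ≤ (1 / 2) ^ m := by
  rw [one_div, inv_pow, exp_neg]
  gcongr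
  rwa [← log_le_iff_le_exp (by positivity), log_pow]

lemma isSieveRange_sievePrimes {s : ℕ} (hs : 200 ≤ s) :
    IsSieveRange (sievePrimes s) (sieveLimit s) (1700 * s) (sieveLength s) where
  prime _ hp := prime_of_mem_sievePrimes hp
  le _ hp := (Nat.lt_of_mem_primesBelow (mem_filter.1 hp).1).le
  one_le := Nat.one_le_two_pow
  le_length := Nat.pow_le_pow_right two_pos (Nat.le_mul_of_pos_left _ (by omega))
  even := ⟨850 * s, by ring⟩
  reciprocalSum_le := by
    push_cast
    linarith [reciprocalSum_sievePrimes_le (show 1 ≤ s by omega)]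
  exp_mul_pow_le := by
    have h_exp : exp (3 / 2 * reciprocalSum (sievePrimes s)) ≤ 2 ^ (850 * s) := by
      rw [← le_log_iff_exp_le (by positivity), log_pow]
      push_cast
      nlinarith [log_two_gt_d9, reciprocalSum_sievePrimes_le (show 1 ≤ s by omega)]
    calc exp (3 / 2 * reciprocalSum (sievePrimes s)) * (sieveLimit s : ℝ) ^ (2 * (1700 * s))
        ≤ 2 ^ (850 * s) * (2 ^ 2 ^ (99 * s)) ^ (2 * (1700 * s)) := by
          rw [sieveLimit]
          push_cast
          gcongr
      _ = 2 ^ (850 * s + 3400 * s * 2 ^ (99 * s)) := by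
          rw [← pow_mul, ← pow_add]
          ring_nf
      _ ≤ 2 ^ (5000 * s * 2 ^ (99 * s)) := by
          refine pow_le_pow_right₀ one_le_two ?_
          nlinarith [Nat.one_le_two_pow (n := 99 * s)]
      _ = sieveLength s := by
          rw [sieveLength]
          push_cast
          rfl

lemma sieve_error_le {n s : ℕ} (hs : 200 ≤ s) (hn : n ≤ 2 ^ s) {L : ℝ} (hL : 97 * s * log 2 ≤ L) :
    ((2 ^ (2 * s) : ℕ) : ℝ)⁻¹ + exp (-(1 / 21 * L))
      + 36 * n * (2 ^ (100 * (s + 1)) : ℕ) * exp (-((2 - 4 / 3 * log 2) * L)) ≤ (1 / 2) ^ s := by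
  have hL0 : 0 ≤ L := hL.trans' (by positivity)
  have h_sq : ((2 ^ (2 * s) : ℕ) : ℝ)⁻¹ = (1 / 2) ^ (2 * s) := by
    push_cast
    rw [one_div, inv_pow]
  have h_omega : exp (-(1 / 21 * L)) ≤ (1 / 2) ^ (2 * s) := by
    refine exp_neg_le_half_pow ?_
    push_cast
    nlinarith [show 0 ≤ s * log 2 by positivity]
  have h_main : 36 * n * (2 ^ (100 * (s + 1)) : ℕ) * exp (-((2 - 4 / 3 * log 2) * L))
      ≤ (1 / 2 : ℝ) ^ (2 * s) := by
    -- `97 * (2 - 4 / 3 * log 2) > 104` exceeds the `100 + 1 + 2` to be beaten.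
    have h_exp : exp (-((2 - 4 / 3 * log 2) * L)) ≤ (1 / 2) ^ (101 * s + 106 + 2 * s) := by
      refine exp_neg_le_half_pow ?_
      have hs' : (200 : ℝ) ≤ s := mod_cast hs
      push_cast
      nlinarith [log_two_lt_d9, log_two_gt_d9]
    calc 36 * n * (2 ^ (100 * (s + 1)) : ℕ) * exp (-((2 - 4 / 3 * log 2) * L))
        ≤ 2 ^ 6 * 2 ^ s * 2 ^ (100 * (s + 1)) * (1 / 2) ^ (101 * s + 106 + 2 * s) := by
          have hn' : (n : ℝ) ≤ 2 ^ s := mod_cast hn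
          push_cast
          gcongr
          norm_num
      _ = 2 ^ (101 * s + 106) * (1 / 2) ^ (101 * s + 106) * (1 / 2) ^ (2 * s) := by ring
      _ = (1 / 2) ^ (2 * s) := by rw [← mul_pow]; norm_num
  have h_quarter : (1 / 2 : ℝ) ^ s ≤ (1 / 2) ^ 2 :=
    pow_le_pow_of_le_one (by norm_num) (by norm_num) (by omega)
  have h_split : (1 / 2 : ℝ) ^ (2 * s) = (1 / 2) ^ s * (1 / 2) ^ s := by rw [two_mul, pow_add]
  nlinarith [show (0 : ℝ) < (1 / 2) ^ s by positivity]

lemma countUpTo_multiplesOf_block_le {n s : ℕ} (hs : 200 ≤ s) (hn : n ≤ 2 ^ s) (X : ℕ) :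
    (countUpTo (multiplesOf
        {a | a ∈ shiftedPrimeQuotients n ∧ blockIndex a = s ∧ sieveLength s * a ≤ X}) X : ℝ)
      ≤ X * (1 / 2) ^ s := by
  have h_length : sieveLength s ≤ 2 ^ 2 ^ (100 * s) := by
    simpa [blockStart] using
      sieveLength_pow_le_blockStart (s := s) (Q := 1) (by omega) (by nlinarith)
  have h_mem (a : ℕ) (ha : blockIndex a = s) :
      a ∈ Ico (2 ^ 2 ^ (100 * s)) (2 ^ 2 ^ (100 * (s + 1))) :=
    mem_Ico.2 ⟨(le_blockIndex_iff (by omega)).1 ha.ge,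
      lt_of_not_ge fun h_ge ↦ by
        have := (le_blockIndex_iff s.succ_ne_zero).2 h_ge
        omega⟩
  refine ((isSieveRange_sievePrimes hs).countUpTo_multiplesOf_le
    (Nat.two_pow_pos (2 * s)).ne' (hn.trans (Nat.pow_le_pow_right two_pos (by omega)))
    (fun p hp ↦ (mem_filter.1 hp).2) h_length (fun a ha ↦ ha.1) (fun a ha ↦ h_mem a ha.2.1)
    fun a ha ↦ ha.2.2).trans ?_
  gcongr
  exact sieve_error_le hs hn (le_reciprocalSum_sievePrimes hs)

lemma countUpTo_multiplesOf_blocks_le {n s : ℕ} (hs : 200 ≤ s) (hn : n ≤ 2 ^ s) (X : ℕ) :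
    (countUpTo (multiplesOf {a | a ∈ shiftedPrimeQuotients n ∧ s ≤ blockIndex a ∧
        sieveLength (blockIndex a) * a ≤ X}) X : ℝ) ≤ X * (2 * (1 / 2) ^ s) := by
  set B : ℕ → Set ℕ := fun t ↦ multiplesOf
    {a | a ∈ shiftedPrimeQuotients n ∧ blockIndex a = t ∧ sieveLength t * a ≤ X}
  have h_index (a : ℕ) : blockIndex a ≤ a :=
    (Nat.div_le_self _ _).trans <| (Nat.log_le_self _ _).trans (Nat.log_le_self _ _)
  have h_cover : countUpTo (multiplesOf {a | a ∈ shiftedPrimeQuotients n ∧ s ≤ blockIndex a ∧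
      sieveLength (blockIndex a) * a ≤ X}) X ≤ countUpTo (⋃ t ∈ Ico s (X + 1), B t) X := by
    refine countUpTo_le_countUpTo ?_
    rintro x ⟨a, ⟨ha, has, haX⟩, hax⟩ hx hxX
    have := h_index a
    have := Nat.le_of_dvd hx hax
    exact Set.mem_biUnion (x := blockIndex a) (mem_Ico.2 (by omega)) ⟨a, ⟨ha, rfl, haX⟩, hax⟩
  calc (countUpTo (multiplesOf _) X : ℝ)
      ≤ ∑ t ∈ Ico s (X + 1), (countUpTo (B t) X : ℝ) := by
        exact_mod_cast h_cover.trans (countUpTo_biUnion_le _ _ X)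
    _ ≤ ∑ t ∈ Ico s (X + 1), (X : ℝ) * (1 / 2) ^ t := sum_le_sum fun t ht ↦ by
        have hst := (mem_Ico.1 ht).1
        exact countUpTo_multiplesOf_block_le (hs.trans hst)
          (hn.trans (Nat.pow_le_pow_right two_pos hst)) X
    _ ≤ X * ((1 / 2) ^ s / (1 - 1 / 2)) := by
        rw [← mul_sum]
        gcongr
        exact geom_sum_Ico_le_of_lt_one (by norm_num) (by norm_num)
    _ = X * (2 * (1 / 2) ^ s) := by ring

end Blocks

section SmallCofactor

open scoped Nat.Prime in
lemma primeCounting_mul_log_le (N : ℕ) : π N * log N ≤ 5 * N := by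
  rcases le_or_gt N 1 with hN | hN
  · interval_cases N <;> simp
  · have hN' : (1 : ℝ) < N := mod_cast hN
    have h_log : 0 < log N := log_pos hN'
    have h_sqrt : √N * log N ≤ 2 * N := by
      have h_le : log √N ≤ √N := log_le_self (sqrt_nonneg _)
      rw [log_sqrt (by positivity)] at h_le
      nlinarith [mul_self_sqrt (show (0 : ℝ) ≤ N by positivity), sqrt_nonneg (N : ℝ)]
    have h_log_four : log 4 ≤ 3 / 2 := by
      rw [show (4 : ℝ) = 2 ^ 2 by norm_num, log_pow]
      push_cast
      linarith [log_two_lt_d9]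
    calc π N * log N ≤ (log 4 * N / (log N / 2) + √N) * log N := by
          have h_pi := Chebyshev.pi_le_log4_mul_div hN'
          rw [Nat.floor_natCast, log_sqrt (by positivity)] at h_pi
          gcongr
      _ = 2 * (log 4 * N) + √N * log N := by field_simp
      _ ≤ 5 * N := by nlinarith

lemma countUpTo_prime_mul_add_one_mul_log_le {d b X : ℕ} (hd : 0 < d) (hb : 0 < b)
    (hbX : b ^ 2 ≤ X) :
    countUpTo {a | (d * a + 1).Prime} (X / b) * log X ≤ 20 * d * X * (b : ℝ)⁻¹ := by
  set N := d * (X / b) + 1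
  have h_count : countUpTo {a | (d * a + 1).Prime} (X / b) ≤ N.primeCounting := by
    rw [countUpTo, ← Nat.primesLE_card_eq_primeCounting]
    refine card_le_card_of_injOn (d * · + 1) (fun a ha ↦ ?_) fun a _ a' _ h ↦ ?_
    · simp only [coe_filter, mem_Ioc, Set.mem_ofPred_eq] at ha
      exact Nat.mem_primesLE.2 ⟨Nat.succ_le_succ (Nat.mul_le_mul_left d ha.1.2), ha.2⟩
    · exact Nat.eq_of_mul_eq_mul_left hd (Nat.succ_injective h)
  have hb' : (0 : ℝ) < b := mod_cast hb
  have hX : (0 : ℝ) < X := mod_cast (pow_pos hb 2).trans_le hbX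
  have h_lower : X ≤ N ^ 2 := by
    have h_lt : X < b * (X / b + 1) := Nat.lt_mul_div_succ X hb
    have h_div : b ≤ X / b := (Nat.le_div_iff_mul_le hb).2 (by rwa [← sq])
    have h_N : X / b + 1 ≤ N := Nat.succ_le_succ (Nat.le_mul_of_pos_left _ hd)
    nlinarith
  have h_upper : (N : ℝ) ≤ 2 * d * X * (b : ℝ)⁻¹ := by
    have h_nat : N * b ≤ 2 * d * X := by
      have h_mul : X / b * b ≤ X := Nat.div_mul_le_self X b
      have h_bX : b ≤ d * X := by nlinarith
      calc N * b = d * (X / b * b) + b := by ring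
        _ ≤ d * X + d * X := by gcongr
        _ = 2 * d * X := by ring
    rw [← div_eq_mul_inv, le_div_iff₀ hb']
    exact_mod_cast h_nat
  have h_log : log X ≤ 2 * log N := by
    have h_pow := log_le_log hX (show (X : ℝ) ≤ (N : ℝ) ^ 2 by exact_mod_cast h_lower)
    rwa [log_pow, Nat.cast_two] at h_pow
  calc countUpTo {a | (d * a + 1).Prime} (X / b) * log X
      ≤ N.primeCounting * (2 * log N) := by gcongr
    _ ≤ 20 * d * X * (b : ℝ)⁻¹ := by linarith [primeCounting_mul_log_le N]

lemma countUpTo_dvd_and_prime_mul_log_le {d b X : ℕ} (hd : 0 < d) (hb : 0 < b) (hbX : b ^ 2 ≤ X) :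
    countUpTo {x | b ∣ x ∧ x ∈ {y | (d * (y / b) + 1).Prime}} X * log X
      ≤ 20 * d * X * (b : ℝ)⁻¹ := by
  rw [countUpTo_setOf_dvd_and hb.ne']
  simp only [Set.mem_ofPred_eq, Nat.mul_div_cancel_left _ hb]
  exact countUpTo_prime_mul_add_one_mul_log_le hd hb hbX

lemma harmonic_nthRoot_le {Q X : ℕ} (hQ : Q ≠ 0) (hX : 0 < X) (hQX : Q ≤ log X) :
    (harmonic (Q.nthRoot X) : ℝ) ≤ 2 * log X / Q := by
  have h_one : 1 ≤ Q.nthRoot X := (Nat.le_nthRoot_iff hQ).2 (by rwa [one_pow])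
  have h_log : Q * log (Q.nthRoot X) ≤ log X := by
    rw [← log_pow]
    exact log_le_log (mod_cast pow_pos h_one Q) (mod_cast (Nat.le_nthRoot_iff hQ).1 le_rfl)
  have hQ' : (0 : ℝ) < Q := mod_cast Nat.pos_of_ne_zero hQ
  rw [le_div_iff₀ hQ']
  nlinarith [harmonic_le_one_add_log (Q.nthRoot X)]

lemma countUpTo_exists_cofactor_pow_le_sum (n : ℕ) {Q : ℕ} (hQ : Q ≠ 0) (X : ℕ) :
    countUpTo {x | ∃ a ∈ shiftedPrimeQuotients n, a ∣ x ∧ (x / a) ^ Q ≤ X} X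
      ≤ ∑ d ∈ Icc 1 n, ∑ b ∈ Icc 1 (Q.nthRoot X),
          countUpTo {x | b ∣ x ∧ x ∈ {y | (d * (y / b) + 1).Prime}} X := by
  have h_cover : countUpTo {x | ∃ a ∈ shiftedPrimeQuotients n, a ∣ x ∧ (x / a) ^ Q ≤ X} X
      ≤ countUpTo (⋃ d ∈ Icc 1 n, ⋃ b ∈ Icc 1 (Q.nthRoot X),
          {x | b ∣ x ∧ x ∈ {y | (d * (y / b) + 1).Prime}}) X := by
    refine countUpTo_le_countUpTo ?_
    rintro x ⟨a, ⟨d, hd, h_prime⟩, ⟨b, rfl⟩, hbX⟩ hx -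
    have ha : 0 < a := Nat.pos_of_mul_pos_right hx
    have hb : 0 < b := Nat.pos_of_mul_pos_left hx
    rw [Nat.mul_div_cancel_left b ha, ← Nat.le_nthRoot_iff hQ] at hbX
    refine Set.mem_biUnion hd (Set.mem_biUnion (mem_Icc.2 ⟨hb, hbX⟩) ⟨dvd_mul_left b a, ?_⟩)
    simpa only [Set.mem_ofPred_eq, Nat.mul_div_cancel a hb]
  exact h_cover.trans <| (countUpTo_biUnion_le _ _ X).trans <|
    sum_le_sum fun d _ ↦ countUpTo_biUnion_le _ _ X

lemma countUpTo_exists_cofactor_pow_le (n : ℕ) {Q X : ℕ} (hQ : 2 ≤ Q) (hQX : Q ≤ log X) :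
    (countUpTo {x | ∃ a ∈ shiftedPrimeQuotients n, a ∣ x ∧ (x / a) ^ Q ≤ X} X : ℝ)
      ≤ X * (40 * n ^ 2 / Q) := by
  set B := Q.nthRoot X
  have h_log : 0 < log X := hQX.trans_lt' (by positivity)
  have hX : 0 < X := Nat.pos_of_ne_zero fun h ↦ by simp [h] at h_log
  have h_term (d) (hd : d ∈ Icc 1 n) (b) (hb : b ∈ Icc 1 B) :
      countUpTo {x | b ∣ x ∧ x ∈ {y | (d * (y / b) + 1).Prime}} X * log X
        ≤ 20 * n * X * (b : ℝ)⁻¹ := by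
    obtain ⟨hd0, hdn⟩ := mem_Icc.1 hd
    obtain ⟨hb0, hbB⟩ := mem_Icc.1 hb
    have hbX : b ^ 2 ≤ X := (Nat.pow_le_pow_right hb0 hQ).trans
      ((Nat.le_nthRoot_iff (by omega)).1 hbB)
    refine (countUpTo_dvd_and_prime_mul_log_le hd0 hb0 hbX).trans ?_
    gcongr
  refine le_of_mul_le_mul_right ?_ h_log
  calc (countUpTo {x | ∃ a ∈ shiftedPrimeQuotients n, a ∣ x ∧ (x / a) ^ Q ≤ X} X : ℝ) * log X
      ≤ (∑ d ∈ Icc 1 n, ∑ b ∈ Icc 1 B,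
          (countUpTo {x | b ∣ x ∧ x ∈ {y | (d * (y / b) + 1).Prime}} X : ℝ)) * log X := by
        gcongr
        exact_mod_cast countUpTo_exists_cofactor_pow_le_sum n (by omega) X
    _ ≤ ∑ d ∈ Icc 1 n, ∑ b ∈ Icc 1 B, 20 * n * X * (b : ℝ)⁻¹ := by
        simp only [sum_mul]
        exact sum_le_sum fun d hd ↦ sum_le_sum fun b hb ↦ h_term d hd b hb
    _ = n * (20 * n * X * harmonic B) := by
        rw [sum_const, Nat.card_Icc, nsmul_eq_mul, Nat.add_sub_cancel, ← mul_sum,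
          harmonic_eq_sum_Icc]
        push_cast
        rfl
    _ ≤ n * (20 * n * X * (2 * log X / Q)) := by
        gcongr
        exact harmonic_nthRoot_le (by omega) hX hQX
    _ = X * (40 * n ^ 2 / Q) * log X := by ring

lemma multiplesOf_large_subset {n s Q X : ℕ} (hs : 10 ≤ s) (hQ : 5000 * Q ≤ s ^ 2) (x : ℕ)
    (hx : x ∈ multiplesOf {a | a ∈ shiftedPrimeQuotients n ∧ blockStart s ≤ a}) (hx0 : 0 < x)
    (hxX : x ≤ X) :
    x ∈ multiplesOf {a | a ∈ shiftedPrimeQuotients n ∧ s ≤ blockIndex a ∧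
        sieveLength (blockIndex a) * a ≤ X} ∪
      {x | ∃ a ∈ shiftedPrimeQuotients n, a ∣ x ∧ (x / a) ^ Q ≤ X} := by
  obtain ⟨a, ⟨ha, has⟩, hax⟩ := hx
  rw [← le_blockIndex_iff (by omega)] at has
  rcases le_or_gt (sieveLength (blockIndex a) * a) X with h_short | h_long
  · exact .inl ⟨a, ⟨ha, has, h_short⟩, hax⟩
  · refine .inr ⟨a, ha, hax, ?_⟩
    calc (x / a) ^ Q ≤ sieveLength (blockIndex a) ^ Q :=
          Nat.pow_le_pow_left (Nat.div_le_of_le_mul (by linarith)) Q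
      _ ≤ blockStart (blockIndex a) := sieveLength_pow_le_blockStart (hs.trans has)
          (hQ.trans (Nat.pow_le_pow_left has 2))
      _ ≤ a := (le_blockIndex_iff (by omega)).1 le_rfl
      _ ≤ X := (Nat.le_of_dvd hx0 hax).trans hxX

lemma exists_eventually_countUpTo_multiplesOf_le (n : ℕ) {ε : ℝ} (hε : 0 < ε) :
    ∃ t : ℕ, ∀ᶠ X : ℕ in atTop,
      (countUpTo (multiplesOf {a | a ∈ shiftedPrimeQuotients n ∧ t ≤ a}) X : ℝ) ≤ ε * X := by
  obtain ⟨Q, hQ⟩ := exists_nat_ge (max 2 (80 * (n : ℝ) ^ 2 / ε))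
  have hQ_two : 2 ≤ Q := mod_cast (le_max_left (2 : ℝ) _).trans hQ
  have hQ_eps : 40 * (n : ℝ) ^ 2 / Q ≤ ε / 2 := by
    have h := (le_max_right _ _).trans hQ
    rw [div_le_iff₀ hε] at h
    rw [div_le_iff₀ (by positivity)]
    linarith
  obtain ⟨r, hr⟩ := exists_pow_lt_of_lt_one (show 0 < ε / 4 by linarith) one_half_lt_one
  obtain ⟨s, hs⟩ : ∃ s, s = 5000 + n + r + Q := ⟨_, rfl⟩
  have h_half : (1 / 2 : ℝ) ^ s ≤ (1 / 2) ^ r :=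
    pow_le_pow_of_le_one (by norm_num) (by norm_num) (by omega)
  have hns : n ≤ 2 ^ s := Nat.lt_two_pow_self.le.trans (Nat.pow_le_pow_right two_pos (by omega))
  have hQs : 5000 * Q ≤ s ^ 2 := by
    rw [sq]
    exact Nat.mul_le_mul (by omega) (by omega)
  refine ⟨blockStart s, ?_⟩
  have h_log : ∀ᶠ X : ℕ in atTop, (Q : ℝ) ≤ log X :=
    (tendsto_log_atTop.comp tendsto_natCast_atTop_atTop).eventually_ge_atTop _
  filter_upwards [h_log] with X hX
  have h_split := (countUpTo_le_countUpTo (X := X)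
    (multiplesOf_large_subset (n := n) (s := s) (Q := Q) (by omega) hQs)).trans
      (countUpTo_union_le _ _ X)
  calc (countUpTo (multiplesOf {a | a ∈ shiftedPrimeQuotients n ∧ blockStart s ≤ a}) X : ℝ)
      ≤ X * (2 * (1 / 2) ^ s) + X * (40 * n ^ 2 / Q) :=
        (show (_ : ℝ) ≤ _ from mod_cast h_split).trans <|
          add_le_add (countUpTo_multiplesOf_blocks_le (by omega) hns X)
            (countUpTo_exists_cofactor_pow_le n hQ_two hX)
    _ ≤ X * (ε / 2) + X * (ε / 2) := by
        gcongr
        linarith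
    _ = ε * X := by ring

end SmallCofactor

section Density

/-- `S` has natural density `δ`. -/
def HasDensity (S : Set ℕ) (δ : ℝ) : Prop :=
  Tendsto (fun X : ℕ ↦ (countUpTo S X : ℝ) / X) atTop (𝓝 δ)

namespace HasDensity

variable {S T : Set ℕ} {δ δ' : ℝ}

lemma mono (hS : HasDensity S δ) (hT : HasDensity T δ') (h : S ⊆ T) : δ ≤ δ' :=
  le_of_tendsto_of_tendsto' hS hT fun X ↦ by
    gcongr
    exact countUpTo_mono h X

lemma nonneg (hS : HasDensity S δ) : 0 ≤ δ := ge_of_tendsto' hS fun X ↦ by positivity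

lemma tendsto_countUpTo_floor_div (hS : HasDensity S δ) {n : ℕ} (hn : 0 < n) :
    Tendsto (fun x : ℝ ↦ (countUpTo S (⌊x⌋₊ / n) : ℝ) / x) atTop (𝓝 (δ / n)) := by
  have hn' : (0 : ℝ) < n := mod_cast hn
  have h_floor : Tendsto (fun x : ℝ ↦ ⌊(n : ℝ)⁻¹ * x⌋₊) atTop atTop :=
    tendsto_nat_floor_atTop.comp (tendsto_id.const_mul_atTop (inv_pos.2 hn'))
  rw [div_eq_mul_inv]
  refine ((Tendsto.comp hS h_floor).mul
    (tendsto_nat_floor_mul_div_atTop (inv_pos.2 hn').le)).congr' ?_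
  filter_upwards [h_floor.eventually_gt_atTop 0] with x hx
  have h_div : ⌊x⌋₊ / n = ⌊(n : ℝ)⁻¹ * x⌋₊ := by rw [inv_mul_eq_div, Nat.floor_div_natCast]
  rw [comp_apply, h_div, div_mul_div_cancel₀ (mod_cast hx.ne')]

lemma one_sub_inv_mul_le (hS : HasDensity S δ) {p : ℕ} (hp : 0 < p)
    (h_sdiff : HasDensity (S \ {x | p ∣ x}) δ') (h_closed : ∀ x, p * x ∈ S → x ∈ S) :
    (1 - (p : ℝ)⁻¹) * δ ≤ δ' := by
  have h_count (X : ℕ) : countUpTo S X ≤ countUpTo (S \ {x | p ∣ x}) X + countUpTo S (X / p) := by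
    have h_cover : S ⊆ S \ {x | p ∣ x} ∪ {x | p ∣ x ∧ x ∈ S} := fun x hx ↦ by
      by_cases hpx : p ∣ x
      exacts [.inr ⟨hpx, hx⟩, .inl ⟨hx, hpx⟩]
    refine (countUpTo_mono h_cover X).trans ((countUpTo_union_le _ _ X).trans ?_)
    rw [countUpTo_setOf_dvd_and hp.ne']
    gcongr
    exact countUpTo_mono h_closed _
  have h_scaled := (hS.tendsto_countUpTo_floor_div hp).comp tendsto_natCast_atTop_atTop
  rw [show (1 - (p : ℝ)⁻¹) * δ = δ - δ / p by ring]
  refine le_of_tendsto_of_tendsto' (hS.sub h_scaled) h_sdiff fun X ↦ ?_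
  rw [comp_apply, Nat.floor_natCast, ← sub_div]
  gcongr
  rw [sub_le_iff_le_add]
  exact_mod_cast h_count X

lemma iInf {T : ℕ → Set ℕ} {δ : ℕ → ℝ} (hT : ∀ t, HasDensity (T t) (δ t)) (hST : ∀ t, S ⊆ T t)
    (h_approx : ∀ ε > 0, ∃ t, ∀ᶠ X : ℕ in atTop, (countUpTo (T t \ S) X : ℝ) ≤ ε * X) :
    HasDensity S (⨅ t, δ t) := by
  have h_bdd : BddBelow (Set.range δ) := ⟨0, by rintro _ ⟨t, rfl⟩; exact (hT t).nonneg⟩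
  refine tendsto_order.2 ⟨fun c hc ↦ ?_, fun c hc ↦ ?_⟩
  · obtain ⟨t, ht⟩ := h_approx (((⨅ t, δ t) - c) / 2) (by linarith)
    have h_inf := ciInf_le h_bdd t
    filter_upwards [ht, (hT t).eventually_const_lt
      (show ((⨅ t, δ t) + c) / 2 < δ t by linarith), eventually_gt_atTop 0] with X hX hXT hX0
    have hX0' : (0 : ℝ) < X := mod_cast hX0
    have h_count : (countUpTo (T t) X : ℝ) ≤ countUpTo (T t \ S) X + countUpTo S X := by
      have h_le := countUpTo_union_le (T t \ S) S X
      rw [Set.sdiff_union_of_subset (hST t)] at h_le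
      exact_mod_cast h_le
    rw [lt_div_iff₀ hX0'] at hXT ⊢
    linarith
  · obtain ⟨t, ht⟩ := exists_lt_of_ciInf_lt hc
    filter_upwards [(hT t).eventually_lt_const ht] with X hX
    refine hX.trans_le' ?_
    gcongr
    exact countUpTo_mono (hST t) X

end HasDensity

lemma exists_hasDensity_of_periodic {S : Set ℕ} {m : ℕ} (hm : 0 < m) (hS : Periodic (· ∈ S) m) :
    ∃ δ, HasDensity S δ := by
  classical
  set f : ℕ → ℝ := fun a ↦ if a + 1 ∈ S then 1 else 0
  have hf : Periodic f m := fun a ↦ by simp only [f, add_right_comm a m 1, hS (a + 1)]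
  have h_sum (X : ℕ) : (countUpTo S X : ℝ) = ∑ a ∈ range X, f a := by
    rw [countUpTo, card_filter]
    push_cast
    induction X with
    | zero => simp
    | succ X ih => rw [sum_Ioc_succ_top X.zero_le, sum_range_succ, ← ih]
  refine ⟨residueMean f m, tendsto_iff_norm_sub_tendsto_zero.2 ?_⟩
  refine squeeze_zero' (.of_forall fun _ ↦ norm_nonneg _) ?_
    (tendsto_const_div_atTop_nhds_zero_nat (m : ℝ))
  filter_upwards [eventually_gt_atTop 0] with X hX
  have hX' : (0 : ℝ) < X := mod_cast hX
  rw [h_sum, div_sub' hX'.ne', norm_div, Real.norm_of_nonneg hX'.le, Real.norm_eq_abs]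
  gcongr
  exact abs_sum_range_sub_mul_residueMean_le hf (fun a ↦ by simp only [f]; split_ifs <;> simp)
    (fun a ↦ by simp only [f]; split_ifs <;> simp) hm X

lemma exists_hasDensity_compl_multiplesOf_of_finite {A : Set ℕ} (hA : A.Finite) (hA0 : 0 ∉ A) :
    ∃ δ, HasDensity (multiplesOf A)ᶜ δ := by
  refine exists_hasDensity_of_periodic (m := ∏ a ∈ hA.toFinset, a)
    (Nat.pos_of_ne_zero (prod_ne_zero_iff.2 fun a ha h ↦ hA0 (h ▸ hA.mem_toFinset.1 ha)))
    fun x ↦ propext (not_congr (exists_congr fun a ↦ and_congr_right fun ha ↦ ?_))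
  exact (Nat.dvd_add_left (dvd_prod_of_mem _ (hA.mem_toFinset.2 ha)))

lemma compl_multiplesOf_insert (p : ℕ) (A : Set ℕ) :
    (multiplesOf (insert p A))ᶜ = (multiplesOf A)ᶜ \ {x | p ∣ x} := by
  ext x
  simp only [multiplesOf, Set.mem_compl_iff, Set.mem_ofPred_eq, Set.exists_mem_insert,
    Set.mem_sdiff, not_or]
  exact and_comm

lemma prod_one_sub_inv_mul_le_of_hasDensity {A : Set ℕ} (hA : A.Finite) (hA0 : 0 ∉ A)
    {P : Finset ℕ} (hP : 0 ∉ P) {δ δ' : ℝ} (h : HasDensity (multiplesOf A)ᶜ δ)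
    (h' : HasDensity (multiplesOf (P ∪ A))ᶜ δ') : (∏ p ∈ P, (1 - (p : ℝ)⁻¹)) * δ ≤ δ' := by
  induction P using Finset.induction_on generalizing δ' with
  | empty =>
    rw [coe_empty, Set.empty_union] at h'
    rw [prod_empty, one_mul, tendsto_nhds_unique h h']
  | insert p P hp ih =>
    obtain ⟨hp0, hP0⟩ := not_or.1 (mem_insert.not.1 hP)
    have hp1 : (1 : ℝ) ≤ p := mod_cast Nat.one_le_iff_ne_zero.2 (Ne.symm hp0)
    obtain ⟨δ₁, h₁⟩ := exists_hasDensity_compl_multiplesOf_of_finite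
      (P.finite_toSet.union hA) (not_or.2 ⟨hP0, hA0⟩)
    rw [coe_insert, Set.insert_union, compl_multiplesOf_insert] at h'
    calc (∏ q ∈ insert p P, (1 - (q : ℝ)⁻¹)) * δ
        = (1 - (p : ℝ)⁻¹) * ((∏ q ∈ P, (1 - (q : ℝ)⁻¹)) * δ) := by rw [prod_insert hp, mul_assoc]
      _ ≤ (1 - (p : ℝ)⁻¹) * δ₁ := by
        gcongr
        · exact sub_nonneg.2 (inv_le_one_of_one_le₀ hp1)
        · exact ih hP0 h₁
      _ ≤ δ' := h₁.one_sub_inv_mul_le (Nat.pos_of_ne_zero (Ne.symm hp0)) h'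
        fun x hx ⟨a, ha, hax⟩ ↦ hx ⟨a, ha, hax.mul_left p⟩

lemma half_le_of_hasDensity_compl_multiplesOf {n s : ℕ} (hs : 200 ≤ s) (hn : n ≤ 2 ^ s)
    {A : Set ℕ} (hA : A.Finite) (hA_sub : A ⊆ shiftedPrimeQuotients n)
    (hA_le : ∀ a ∈ A, blockStart s ≤ a) {δ : ℝ} (h : HasDensity (multiplesOf A)ᶜ δ) :
    1 / 2 ≤ δ := by
  have h_long : ∀ᶠ X in atTop, ∀ a ∈ A, sieveLength (blockIndex a) * a ≤ X :=
    (eventually_all_finite hA).2 fun a _ ↦ eventually_ge_atTop _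
  refine ge_of_tendsto h ?_
  filter_upwards [h_long, eventually_gt_atTop 0] with X hX hX0
  have h_sub : multiplesOf A ⊆ multiplesOf {a | a ∈ shiftedPrimeQuotients n ∧ s ≤ blockIndex a ∧
      sieveLength (blockIndex a) * a ≤ X} := fun x ⟨a, ha, hax⟩ ↦
    ⟨a, ⟨hA_sub ha, (le_blockIndex_iff (by omega)).2 (hA_le a ha), hX a ha⟩, hax⟩
  have h_count : (countUpTo (multiplesOf A) X : ℝ) ≤ X * (2 * (1 / 2) ^ s) :=
    (show (_ : ℝ) ≤ _ from mod_cast countUpTo_mono h_sub X).trans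
      (countUpTo_multiplesOf_blocks_le hs hn X)
  have h_pow : (1 / 2 : ℝ) ^ s ≤ (1 / 2) ^ 2 :=
    pow_le_pow_of_le_one (by norm_num) (by norm_num) (by omega)
  have h_compl : (countUpTo (multiplesOf A)ᶜ X : ℝ) + countUpTo (multiplesOf A) X = X :=
    mod_cast countUpTo_compl_add (multiplesOf A) X
  rw [le_div_iff₀ (mod_cast hX0)]
  nlinarith [show (0 : ℝ) ≤ X by positivity]

lemma exp_neg_le_prod_primesBelow_blockStart (s : ℕ) :
    exp (-(6 + 400 * s * log 2)) ≤ ∏ p ∈ (blockStart s).primesBelow, (1 - (p : ℝ)⁻¹) := by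
  have h_log : log (2 ^ (100 * s) : ℕ) = 100 * s * log 2 := by
    push_cast
    rw [log_pow]
    push_cast
    rfl
  have h_sum := reciprocalSum_primesBelow_two_pow_le (2 ^ (100 * s))
  refine (exp_le_exp.2 ?_).trans (exp_neg_reciprocalSum_primesBelow_le _)
  rw [h_log] at h_sum
  rw [blockStart]
  linarith

lemma le_of_hasDensity_compl_multiplesOf_of_finite {n s : ℕ} (hs : 200 ≤ s) (hn : n ≤ 2 ^ s)
    {A : Set ℕ} (hA : A.Finite) (hA_sub : A ⊆ shiftedPrimeQuotients n) (hA_two : ∀ a ∈ A, 2 ≤ a)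
    {δ : ℝ} (h : HasDensity (multiplesOf A)ᶜ δ) : exp (-(6 + 400 * s * log 2)) / 2 ≤ δ := by
  set P := (blockStart s).primesBelow
  set A' : Set ℕ := {a | a ∈ A ∧ blockStart s ≤ a}
  have hA' : A'.Finite := hA.subset fun a ha ↦ ha.1
  have hA'0 : 0 ∉ A' := fun h0 ↦ absurd (hA_two 0 h0.1) (by norm_num)
  have hP0 : 0 ∉ P := fun h0 ↦ Nat.not_prime_zero (Nat.prime_of_mem_primesBelow h0)
  obtain ⟨δ₁, h₁⟩ := exists_hasDensity_compl_multiplesOf_of_finite hA' hA'0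
  obtain ⟨δ₂, h₂⟩ := exists_hasDensity_compl_multiplesOf_of_finite
    (P.finite_toSet.union hA') (not_or.2 ⟨hP0, hA'0⟩)
  have h_sub : multiplesOf A ⊆ multiplesOf (P ∪ A') := by
    rintro x ⟨a, ha, hax⟩
    have ha2 := hA_two a ha
    rcases le_or_gt (blockStart s) a with h_large | h_small
    · exact ⟨a, .inr ⟨ha, h_large⟩, hax⟩
    · exact ⟨a.minFac, .inl (Nat.mem_primesBelow.2
        ⟨(Nat.minFac_le (by omega)).trans_lt h_small, Nat.minFac_prime (by omega)⟩),
        a.minFac_dvd.trans hax⟩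
  calc exp (-(6 + 400 * s * log 2)) / 2
      = exp (-(6 + 400 * s * log 2)) * (1 / 2) := by ring
    _ ≤ (∏ p ∈ P, (1 - (p : ℝ)⁻¹)) * δ₁ := by
        have h_half := half_le_of_hasDensity_compl_multiplesOf hs hn hA'
          (fun a ha ↦ hA_sub ha.1) (fun a ha ↦ ha.2) h₁
        have h_exp := exp_neg_le_prod_primesBelow_blockStart s
        exact mul_le_mul h_exp h_half (by norm_num) (h_exp.trans' (exp_pos _).le)
    _ ≤ δ₂ := prod_one_sub_inv_mul_le_of_hasDensity hA' hA'0 hP0 h₁ h₂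
    _ ≤ δ := h₂.mono h (Set.compl_subset_compl.2 h_sub)

theorem exists_hasDensity_compl_multiplesOf {n s : ℕ} (hs : 200 ≤ s) (hn : n ≤ 2 ^ s) {A : Set ℕ}
    (hA_sub : A ⊆ shiftedPrimeQuotients n) (hA_two : ∀ a ∈ A, 2 ≤ a) :
    ∃ δ, HasDensity (multiplesOf A)ᶜ δ ∧ exp (-(6 + 400 * s * log 2)) / 2 ≤ δ := by
  set F : ℕ → Set ℕ := fun t ↦ {a | a ∈ A ∧ a < t}
  have hF (t : ℕ) : (F t).Finite := (Set.finite_lt_nat t).subset fun a ha ↦ ha.2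
  have h_exists (t : ℕ) : ∃ δ, HasDensity (multiplesOf (F t))ᶜ δ :=
    exists_hasDensity_compl_multiplesOf_of_finite (hF t)
      fun h0 ↦ absurd (hA_two 0 h0.1) (by norm_num)
  choose δ hδ using h_exists
  refine ⟨⨅ t, δ t, .iInf hδ (fun t ↦ ?_) fun ε hε ↦ ?_, le_ciInf fun t ↦
    le_of_hasDensity_compl_multiplesOf_of_finite hs hn (hF t) (fun a ha ↦ hA_sub ha.1)
      (fun a ha ↦ hA_two a ha.1) (hδ t)⟩
  · exact Set.compl_subset_compl.2 fun x ⟨a, ha, hax⟩ ↦ ⟨a, ha.1, hax⟩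
  · obtain ⟨t, ht⟩ := exists_eventually_countUpTo_multiplesOf_le n hε
    refine ⟨t, ht.mono fun X hX ↦ hX.trans' ?_⟩
    norm_cast
    refine countUpTo_mono (fun x hx ↦ ?_) X
    obtain ⟨a, ha, hax⟩ := not_not.1 hx.2
    exact ⟨a, ⟨hA_sub ha, not_lt.1 fun h_lt ↦ hx.1 ⟨a, ⟨ha, h_lt⟩, hax⟩⟩, hax⟩

end Density

section ShiftedPrimeDivisors

/-- The least common multiple of the shifted-prime divisors of `n`, which is the least element
of `⟨n⟩`. -/
def classMin (n : ℕ) : ℕ := (spd n).lcm id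

/-- The factors by which a multiple of `L` gains a shifted-prime divisor that `L` does not have:
`d ∣ L * q` if and only if `d / gcd d L ∣ q`. -/
def gainingFactors (L : ℕ) : Set ℕ := {a | ∃ d, (d + 1).Prime ∧ ¬ d ∣ L ∧ d / d.gcd L = a}

variable {n : ℕ}

lemma mem_spd (hn : n ≠ 0) {d : ℕ} : d ∈ spd n ↔ d ∣ n ∧ (d + 1).Prime := by
  simp [spd, hn]

lemma classMin_dvd (hn : n ≠ 0) : classMin n ∣ n :=
  Finset.lcm_dvd fun _ hd ↦ ((mem_spd hn).1 hd).1

lemma dvd_classMin {d : ℕ} (hd : d ∈ spd n) : d ∣ classMin n := dvd_lcm (f := id) hd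

lemma spd_eq_spd_iff {m : ℕ} (hm : m ≠ 0) (hn : n ≠ 0) :
    spd m = spd n ↔ classMin n ∣ m ∧ ∀ d, (d + 1).Prime → d ∣ m → d ∣ classMin n := by
  refine ⟨fun h ↦ ⟨?_, fun d hd hdm ↦ ?_⟩, fun ⟨hm', h⟩ ↦ ?_⟩
  · rw [classMin, ← h]
    exact classMin_dvd hm
  · exact dvd_classMin (h ▸ (mem_spd hm).2 ⟨hdm, hd⟩)
  · ext d
    rw [mem_spd hm, mem_spd hn]
    refine and_congr_left fun hd ↦ ⟨fun hdm ↦ (h d hd hdm).trans (classMin_dvd hn), fun hdn ↦ ?_⟩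
    exact (dvd_classMin ((mem_spd hn).2 ⟨hdn, hd⟩)).trans hm'

lemma div_gcd_dvd_iff {d L q : ℕ} (hL : 0 < L) : d / d.gcd L ∣ q ↔ d ∣ L * q := by
  rw [Nat.div_dvd_iff_dvd_mul (Nat.gcd_dvd_left d L) (Nat.gcd_pos_of_pos_right d hL),
    Nat.dvd_gcd_mul_iff_dvd_mul]

lemma spd_classMin_mul_eq_spd_iff (hn : n ≠ 0) {q : ℕ} (hq : q ≠ 0) :
    spd (classMin n * q) = spd n ↔ q ∈ (multiplesOf (gainingFactors (classMin n)))ᶜ := by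
  have hL := Nat.pos_of_ne_zero (ne_zero_of_dvd_ne_zero hn (classMin_dvd hn))
  rw [spd_eq_spd_iff (mul_ne_zero hL.ne' hq) hn, and_iff_right (dvd_mul_right _ q)]
  constructor
  · rintro h ⟨_, ⟨d, hd, hdL, rfl⟩, hdq⟩
    exact hdL (h d hd ((div_gcd_dvd_iff hL).1 hdq))
  · exact fun h d hd hdq ↦ by_contra fun hdL ↦ h ⟨_, ⟨d, hd, hdL, rfl⟩, (div_gcd_dvd_iff hL).2 hdq⟩

lemma card_filter_spd_eq_spd (hn : n ≠ 0) (N : ℕ) :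
    #{m ∈ Icc 1 N | spd m = spd n} =
      countUpTo (multiplesOf (gainingFactors (classMin n)))ᶜ (N / classMin n) := by
  have hL : classMin n ≠ 0 := ne_zero_of_dvd_ne_zero hn (classMin_dvd hn)
  calc #{m ∈ Icc 1 N | spd m = spd n}
      = countUpTo {m | classMin n ∣ m ∧ m ∈ {m | spd m = spd n}} N := by
        rw [countUpTo]
        refine congrArg card (Finset.ext fun m ↦ ?_)
        simp only [mem_filter, mem_Icc, mem_Ioc, Set.mem_ofPred_eq]
        refine and_congr_right fun hm ↦ (and_iff_right_of_imp fun h ↦ ?_).symm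
        exact ((spd_eq_spd_iff (by omega) hn).1 h).1
    _ = countUpTo {q | spd (classMin n * q) = spd n} (N / classMin n) :=
        countUpTo_setOf_dvd_and hL _ N
    _ = countUpTo (multiplesOf (gainingFactors (classMin n)))ᶜ (N / classMin n) :=
        (countUpTo_le_countUpTo fun q hq hq0 _ ↦
          (spd_classMin_mul_eq_spd_iff hn hq0.ne').1 hq).antisymm
        (countUpTo_le_countUpTo fun q hq hq0 _ ↦
          (spd_classMin_mul_eq_spd_iff hn hq0.ne').2 hq)

lemma gainingFactors_subset {L : ℕ} (hL : 0 < L) : gainingFactors L ⊆ shiftedPrimeQuotients L := by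
  rintro _ ⟨d, hd, -, rfl⟩
  refine ⟨d.gcd L, mem_Icc.2 ⟨Nat.gcd_pos_of_pos_right d hL, Nat.gcd_le_right d hL⟩, ?_⟩
  rwa [Nat.mul_div_cancel' (Nat.gcd_dvd_left d L)]

lemma two_le_of_mem_gainingFactors {L a : ℕ} (hL : 0 < L) (ha : a ∈ gainingFactors L) : 2 ≤ a := by
  obtain ⟨d, hd, hdL, rfl⟩ := ha
  have h_zero : d / d.gcd L ≠ 0 := fun h ↦ by
    have hd0 : d = 0 := by
      rw [← Nat.mul_div_cancel' (Nat.gcd_dvd_left d L), h, mul_zero]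
    exact Nat.not_prime_one (by simpa [hd0] using hd)
  have h_one : d / d.gcd L ≠ 1 := fun h ↦
    hdL (by simpa using (div_gcd_dvd_iff hL).1 h.dvd)
  exact (Nat.two_le_iff _).2 ⟨h_zero, h_one⟩

lemma one_div_rpow_le_exp (hn : 2 ≤ n) :
    1 / (n : ℝ) ^ (100000 : ℝ) ≤ exp (-(6 + 400 * (201 + Nat.log 2 n : ℕ) * log 2)) / 2 / n := by
  have hn' : (0 : ℝ) < n := by positivity
  have h_log_two : log 2 ≤ log n := log_le_log two_pos (mod_cast hn)
  have h_nat_log : Nat.log 2 n * log 2 ≤ log n := by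
    rw [← log_pow]
    exact log_le_log (by positivity) (mod_cast Nat.pow_log_le_self 2 (by omega))
  calc 1 / (n : ℝ) ^ (100000 : ℝ) = exp (-(log n * 100000)) := by
        rw [rpow_def_of_pos hn', exp_neg, one_div]
    _ ≤ exp (-(6 + 400 * (201 + Nat.log 2 n : ℕ) * log 2) - log 2 - log n) := by
        refine exp_le_exp.2 ?_
        push_cast
        linarith [log_two_gt_d9]
    _ = exp (-(6 + 400 * (201 + Nat.log 2 n : ℕ) * log 2)) / 2 / n := by
        rw [exp_sub, exp_sub, exp_log two_pos, exp_log hn']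

end ShiftedPrimeDivisors

theorem class_density_lower_bound_general :
    ∃ C : ℝ, C > 0 ∧ ∀ n : ℕ, 2 ≤ n →
      ∃ δ : ℝ,
        Tendsto (fun x : ℝ =>
            (((Finset.Icc 1 ⌊x⌋₊).filter (fun m => spd m = spd n)).card : ℝ) / x)
          atTop (nhds δ) ∧
        δ ≥ 1 / (n : ℝ) ^ C := by
  refine ⟨100000, by norm_num, fun n hn ↦ ?_⟩
  have hn0 : n ≠ 0 := by omega
  have hL := Nat.pos_of_ne_zero (ne_zero_of_dvd_ne_zero hn0 (classMin_dvd hn0))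
  have hLn : classMin n ≤ n := Nat.le_of_dvd (by omega) (classMin_dvd hn0)
  have h_pow : n ≤ 2 ^ (201 + Nat.log 2 n) :=
    (Nat.lt_pow_succ_log_self one_lt_two n).le.trans (Nat.pow_le_pow_right two_pos (by omega))
  obtain ⟨δ, hδ, h_lower⟩ := exists_hasDensity_compl_multiplesOf (by omega) (hLn.trans h_pow)
    (gainingFactors_subset hL) (fun a ↦ two_le_of_mem_gainingFactors hL)
  refine ⟨δ / classMin n, ?_, (one_div_rpow_le_exp hn).trans ?_⟩
  · simpa only [card_filter_spd_eq_spd hn0] using hδ.tendsto_countUpTo_floor_div hL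
  · gcongr
    exact hδ.nonneg

theorem class_density_lower_bound :
    ∃ C : ℝ, C > 0 ∧ ∀ n : ℕ, 0 < n → 2 ∣ n →
      n = (spd n).lcm id →
      ∃ δ : ℝ,
        Tendsto (fun x : ℝ =>
            (((Finset.Icc 1 ⌊x⌋₊).filter (fun m => spd m = spd n)).card : ℝ) / x)
          atTop (nhds δ) ∧
        δ ≥ 1 / (n : ℝ) ^ (C * (n.divisors.card : ℝ)) := by
  obtain ⟨C, hC, h⟩ := class_density_lower_bound_general
  refine ⟨C, hC, fun n hn h_even _ ↦ ?_⟩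
  have hn_two : 2 ≤ n := Nat.le_of_dvd hn h_even
  obtain ⟨δ, hδ, h_lower⟩ := h n hn_two
  refine ⟨δ, hδ, h_lower.trans' ?_⟩
  have h_card : (1 : ℝ) ≤ #n.divisors := mod_cast card_pos.2 (Nat.nonempty_divisors.2 hn.ne')
  gcongr
  · exact mod_cast hn
  · exact le_mul_of_one_le_right hC.le h_card
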